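/- arXiv:2602.04232 — 8 statements merged into one kernel-verified Lean document; each statement's English description precedes it below -/
import Mathlib

section
/- Let p be an odd prime, k a positive integer, and θ an integer not divisible by p. Define q : ℤ/p^kℤ → ℚ/2ℤ by q(ā) = 2θa²/p^k mod 2ℤ, where a ∈ ℤ is any representative of ā (this is well defined). Then there exists a group automorphism f of ℤ/p^kℤ with q(f(x)) = −q(x) for all x if and only if p ≡ 1 (mod 4). -/
/-- The group `ℚ/2ℤ`. -/
abbrev QModTwo : Type := ℚ ⧸ AddSubgroup.zmultiples (2 : ℚ)

/-- The canonical projection `ℚ → ℚ/2ℤ`. -/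
noncomputable def toQ2 : ℚ →+ QModTwo := QuotientAddGroup.mk' _

/-- The discriminant form `q(a) = 2θa²/p^k mod 2ℤ` on `ℤ/p^kℤ`. -/
noncomputable def q8 (p k : ℕ) (θ : ℤ) (a : ZMod (p ^ k)) : QModTwo :=
  toQ2 (2 * (θ : ℚ) * (a.val : ℚ) ^ 2 / (p : ℚ) ^ k)

lemma q8_neg_iff (p k : ℕ) (hp : p.Prime) (θ : ℤ) (hθ : ¬ (p : ℤ) ∣ θ) (y x : ZMod (p ^ k)) :
    q8 p k θ y = - q8 p k θ x ↔ y ^ 2 + x ^ 2 = 0 := by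
  have : NeZero (p ^ k) := ⟨pow_ne_zero _ hp.ne_zero⟩
  have hpk : ((p : ℚ) ^ k) ≠ 0 := pow_ne_zero _ (by exact_mod_cast hp.ne_zero)
  have hcop : IsCoprime ((p : ℤ) ^ k) θ :=
    ((Nat.prime_iff_prime_int.mp hp).coprime_iff_not_dvd.mpr hθ).pow_left
  have h1 : y ^ 2 + x ^ 2 = 0 ↔ ((p : ℤ) ^ k) ∣ (y.val : ℤ) ^ 2 + (x.val : ℤ) ^ 2 := by
    have := ZMod.intCast_zmod_eq_zero_iff_dvd ((y.val : ℤ) ^ 2 + (x.val : ℤ) ^ 2) (p ^ k)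
    push_cast at this
    rw [← this]
    simp
  rw [h1, eq_neg_iff_add_eq_zero, q8, q8, ← map_add, toQ2, QuotientAddGroup.mk'_apply,
    QuotientAddGroup.eq_zero_iff, AddSubgroup.mem_zmultiples_iff]
  constructor
  · rintro ⟨n, hn⟩
    apply hcop.dvd_of_dvd_mul_left
    refine ⟨n, ?_⟩
    rw [zsmul_eq_mul] at hn
    field_simp at hn
    have : ((θ * ((y.val : ℤ) ^ 2 + (x.val : ℤ) ^ 2) : ℤ) : ℚ) = (((p : ℤ) ^ k * n : ℤ) : ℚ) := by
      push_cast
      linarith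
    exact_mod_cast this
  · rintro ⟨n, hn⟩
    refine ⟨θ * n, ?_⟩
    have : ((y.val : ℚ) ^ 2 + (x.val : ℚ) ^ 2) = (p : ℚ) ^ k * n := by exact_mod_cast hn
    rw [zsmul_eq_mul]
    field_simp
    push_cast
    linear_combination (-θ : ℚ) * this

/-- for an odd prime `p`, `k ≥ 1` and `p ∤ θ`, the form `q(a) = 2θa²/p^k` on
`ℤ/p^kℤ` admits an anti-automorphism if and only if `p ≡ 1 (mod 4)`. -/
theorem statement8 (p k : ℕ) (hp : p.Prime) (hodd : Odd p) (hk : 0 < k)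
    (θ : ℤ) (hθ : ¬ (p : ℤ) ∣ θ) :
    (∃ f : ZMod (p ^ k) ≃+ ZMod (p ^ k),
        ∀ x : ZMod (p ^ k), q8 p k θ (f x) = - q8 p k θ x) ↔ p % 4 = 1 := by
  have : Fact p.Prime := ⟨hp⟩
  simp only [q8_neg_iff p k hp θ hθ]
  constructor
  · rintro ⟨f, hf⟩
    have h0 := hf 1
    generalize f 1 = u at h0
    have h := congrArg (ZMod.castHom (dvd_pow_self p hk.ne') (ZMod p)) h0
    rw [map_add, map_pow, map_pow, map_one, map_zero, one_pow] at h
    have h3 : p % 4 ≠ 3 := ZMod.exists_sq_eq_neg_one_iff.mp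
      ⟨_, by rw [← sq]; exact (eq_neg_of_add_eq_zero_left h).symm⟩
    obtain ⟨m, hm⟩ := hodd
    omega
  · intro h
    obtain ⟨a, ha⟩ := (ZMod.exists_sq_eq_neg_one_iff (p := p)).mpr (by omega)
    have hd : (p : ℤ) ∣ (a.val : ℤ) ^ 2 - (-1) := by
      rw [← ZMod.intCast_zmod_eq_zero_iff_dvd]
      push_cast
      rw [ZMod.natCast_zmod_val, ha]
      ring
    have hd2 := dvd_sub_pow_of_dvd_sub hd (k - 1)
    rw [Nat.sub_add_cancel hk, (hodd.pow).neg_one_pow, ← pow_mul, mul_comm, pow_mul] at hd2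
    have hu : ∃ u : ZMod (p ^ k), u ^ 2 = -1 := by
      refine ⟨(((a.val : ℤ) ^ p ^ (k - 1) : ℤ) : ZMod (p ^ k)), ?_⟩
      have h2 := (ZMod.intCast_zmod_eq_zero_iff_dvd _ (p ^ k)).mpr
        (by exact_mod_cast hd2 : ((p ^ k : ℕ) : ℤ) ∣ ((a.val : ℤ) ^ p ^ (k - 1)) ^ 2 - (-1))
      rw [Int.cast_sub, sub_eq_zero, Int.cast_pow] at h2
      rw [h2]
      simp
    obtain ⟨u, hu⟩ := hu
    refine ⟨{ toFun := fun x => u * x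
              invFun := fun x => -u * x
              left_inv := fun x => by linear_combination (-x) * hu
              right_inv := fun x => by linear_combination (-x) * hu
              map_add' := fun x y => mul_add _ _ _ }, fun x => ?_⟩
    change (u * x) ^ 2 + x ^ 2 = 0
    linear_combination x ^ 2 * hu
end

section
/- Let p be an odd prime, k₁, k₂ positive integers, and θ₁, θ₂ integers not divisible by p. Define q : (ℤ/p^{k₁}ℤ) × (ℤ/p^{k₂}ℤ) → ℚ/2ℤ by q(ā₁, ā₂) = 2θ₁a₁²/p^{k₁} + 2θ₂a₂²/p^{k₂} mod 2ℤ, on representatives a₁, a₂ (this is well defined). Then there exists a group automorphism f of (ℤ/p^{k₁}ℤ) × (ℤ/p^{k₂}ℤ) with q(f(x)) = −q(x) for all x if and only if p ≡ 1 (mod 4), or p ≡ 3 (mod 4) and k₁ = k₂. -/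
/-- The discriminant form `q(a₁,a₂) = 2θ₁a₁²/p^k₁ + 2θ₂a₂²/p^k₂ mod 2ℤ`. -/
noncomputable def q9 (p k₁ k₂ : ℕ) (θ₁ θ₂ : ℤ)
    (a : ZMod (p ^ k₁) × ZMod (p ^ k₂)) : QModTwo :=
  toQ2 (2 * (θ₁ : ℚ) * (a.1.val : ℚ) ^ 2 / (p : ℚ) ^ k₁ +
    2 * (θ₂ : ℚ) * (a.2.val : ℚ) ^ 2 / (p : ℚ) ^ k₂)

theorem toQ2_congr (N : ℕ) (hN : N ≠ 0) (n m : ℤ) (h : (n : ZMod N) = m) :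
    toQ2 (2 * (n : ℚ) / N) = toQ2 (2 * (m : ℚ) / N) := by
  rw [ZMod.intCast_eq_intCast_iff_dvd_sub] at h
  obtain ⟨c, hc⟩ := h
  have hm : m = n + N * c := by linarith
  have hN' : (N : ℚ) ≠ 0 := by exact_mod_cast hN
  unfold toQ2
  rw [QuotientAddGroup.mk'_apply, QuotientAddGroup.mk'_apply, QuotientAddGroup.eq]
  rw [AddSubgroup.mem_zmultiples_iff]
  refine ⟨c, ?_⟩
  rw [hm]
  push_cast
  field_simp
  simp
  ring

theorem toQ2_zero_of (r : ℚ) (h : toQ2 r = 0) : ∃ n : ℤ, r = 2 * n := by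
  unfold toQ2 at h
  rw [QuotientAddGroup.mk'_apply, QuotientAddGroup.eq_zero_iff,
    AddSubgroup.mem_zmultiples_iff] at h
  obtain ⟨n, hn⟩ := h
  refine ⟨n, ?_⟩
  rw [← hn]
  simp
  ring

theorem lift_quad (p : ℕ) (hp : p.Prime) (hodd : Odd p) (α β t : ℤ) (ht : ¬ (p : ℤ) ∣ t)
    (h0 : ∃ a b : ℤ, (p : ℤ) ∣ α * a ^ 2 + β * b ^ 2 - t) (k : ℕ) :
    ∃ a b : ℤ, (p : ℤ) ^ (k + 1) ∣ α * a ^ 2 + β * b ^ 2 - t := by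
  have hpp : Prime (p : ℤ) := Nat.prime_iff_prime_int.mp hp
  induction k with
  | zero => simpa using h0
  | succ k ih =>
    obtain ⟨a, b, m, hm⟩ := ih
    have hsol : ∃ v w : ℤ, (p : ℤ) ∣ m + 2 * (α * a * v + β * b * w) := by
      have key : ∀ s : ℤ, ¬ (p : ℤ) ∣ s → ∃ v : ℤ, (p : ℤ) ∣ m + 2 * (s * v) := by
        intro s hs
        have h2 : ¬ (p : ℤ) ∣ 2 * s := by
          intro h
          rcases hpp.dvd_or_dvd h with h | h
          · have h' : p ∣ 2 := by exact_mod_cast h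
            have := (Nat.prime_dvd_prime_iff_eq hp Nat.prime_two).mp h'
            subst this
            exact absurd hodd (by decide)
          · exact hs h
        have hc : IsCoprime (p : ℤ) (2 * s) := (hpp.coprime_iff_not_dvd).mpr h2
        obtain ⟨x, y, hxy⟩ := hc
        refine ⟨-m * y, m * x, ?_⟩
        linear_combination (-m) * hxy
      by_cases h1 : (p : ℤ) ∣ α * a
      · by_cases h2 : (p : ℤ) ∣ β * b
        · exfalso
          apply ht
          have h3 : (p : ℤ) ∣ α * a ^ 2 + β * b ^ 2 - t := by
            rw [hm, pow_succ]
            exact ⟨p ^ k * m, by ring⟩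
          have h4 : (p : ℤ) ∣ α * a * a + β * b * b :=
            dvd_add (h1.mul_right _) (h2.mul_right _)
          have h5 := dvd_sub h4 h3
          have h6 : α * a * a + β * b * b - (α * a ^ 2 + β * b ^ 2 - t) = t := by ring
          rwa [h6] at h5
        · obtain ⟨w, hw⟩ := key _ h2
          exact ⟨0, w, by simpa using hw⟩
      · obtain ⟨v, hv⟩ := key _ h1
        exact ⟨v, 0, by simpa using hv⟩
    obtain ⟨v, w, c, hc⟩ := hsol
    refine ⟨a + p ^ (k + 1) * v, b + p ^ (k + 1) * w,
      c + p ^ k * (α * v ^ 2 + β * w ^ 2), ?_⟩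
    linear_combination hm + (p : ℤ) ^ (k + 1) * hc

theorem obstruct (p k d : ℕ) (hp : p.Prime) (θ η a b n : ℤ)
    (hη : ¬ (p : ℤ) ∣ η)
    (h : 2 * (θ : ℚ) * (a : ℚ) ^ 2 / (p : ℚ) ^ k +
      2 * (η : ℚ) * (b : ℚ) ^ 2 / (p : ℚ) ^ (k + d + 1) + 2 * (η : ℚ) / (p : ℚ) ^ (k + d + 1)
        = 2 * n) : p % 4 ≠ 3 := by
  have : Fact p.Prime := ⟨hp⟩
  have hp0 : (p : ℚ) ≠ 0 := by exact_mod_cast hp.ne_zero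
  have h1 : (θ : ℚ) * a ^ 2 * p ^ (d + 1) + η * b ^ 2 + η = n * p ^ (k + d + 1) := by
    have e : (p : ℚ) ^ (k + d + 1) = p ^ k * p ^ (d + 1) := by ring
    rw [e] at h ⊢
    field_simp at h
    linear_combination h
  have h2 : θ * a ^ 2 * p ^ (d + 1) + η * b ^ 2 + η = n * p ^ (k + d + 1) := by
    exact_mod_cast h1
  have h3 := congrArg (Int.cast : ℤ → ZMod p) h2
  push_cast at h3
  simp at h3
  have hη' : (η : ZMod p) ≠ 0 := by
    rwa [Ne, ZMod.intCast_zmod_eq_zero_iff_dvd]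
  rw [← ZMod.exists_sq_eq_neg_one_iff]
  refine ⟨b, ?_⟩
  apply mul_left_cancel₀ hη'
  linear_combination -h3

theorem q9_split (p k₁ k₂ : ℕ) (θ₁ θ₂ : ℤ) (a : ZMod (p ^ k₁) × ZMod (p ^ k₂)) :
    q9 p k₁ k₂ θ₁ θ₂ a = toQ2 (2 * ((θ₁ * (a.1.val : ℤ) ^ 2 : ℤ) : ℚ) / (p ^ k₁ : ℕ)) +
      toQ2 (2 * ((θ₂ * (a.2.val : ℤ) ^ 2 : ℤ) : ℚ) / (p ^ k₂ : ℕ)) := by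
  unfold q9
  rw [← map_add]
  congr 1
  push_cast
  ring

theorem q9_neg (p k₁ k₂ : ℕ) (θ₁ θ₂ : ℤ) (a : ZMod (p ^ k₁) × ZMod (p ^ k₂)) :
    - q9 p k₁ k₂ θ₁ θ₂ a = toQ2 (2 * ((-(θ₁ * (a.1.val : ℤ) ^ 2) : ℤ) : ℚ) / (p ^ k₁ : ℕ)) +
      toQ2 (2 * ((-(θ₂ * (a.2.val : ℤ) ^ 2) : ℤ) : ℚ) / (p ^ k₂ : ℕ)) := by
  unfold q9
  rw [← map_add, ← map_neg]
  congr 1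
  push_cast
  ring

theorem exists_sqrt (p k : ℕ) (hp : p.Prime) (hodd : Odd p) (hk : 0 < k) (h : p % 4 = 1) :
    ∃ u : ZMod (p ^ k), u ^ 2 = -1 := by
  have : Fact p.Prime := ⟨hp⟩
  obtain ⟨s, hs⟩ := (ZMod.exists_sq_eq_neg_one_iff (p := p)).mpr (by omega)
  obtain ⟨s, rfl⟩ := ZMod.intCast_surjective s
  obtain ⟨j, rfl⟩ : ∃ j, k = j + 1 := ⟨k - 1, by omega⟩
  obtain ⟨a, b, hab⟩ := lift_quad p hp hodd 1 0 (-1)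
    (by rw [dvd_neg]; exact (Nat.prime_iff_prime_int.mp hp).not_dvd_one)
    ⟨s, 0, by
      rw [← ZMod.intCast_zmod_eq_zero_iff_dvd]
      push_cast
      linear_combination -hs⟩ j
  refine ⟨a, ?_⟩
  have h' : ((p ^ (j + 1) : ℕ) : ℤ) ∣ 1 * a ^ 2 + 0 * b ^ 2 - -1 := by exact_mod_cast hab
  rw [← ZMod.intCast_zmod_eq_zero_iff_dvd] at h'
  simp only [Int.cast_sub, Int.cast_add, Int.cast_mul, Int.cast_pow, Int.cast_neg,
    Int.cast_one, Int.cast_zero] at h'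
  linear_combination h'

theorem exists_rep (p k : ℕ) (hp : p.Prime) (hodd : Odd p) (hk : 0 < k) (θ₁ θ₂ : ℤ)
    (hθ₁ : ¬ (p : ℤ) ∣ θ₁) (hθ₂ : ¬ (p : ℤ) ∣ θ₂) :
    ∃ a b : ZMod (p ^ k), (θ₁ : ZMod (p ^ k)) * a ^ 2 + θ₂ * b ^ 2 = -θ₁ := by
  have : Fact p.Prime := ⟨hp⟩
  obtain ⟨j, rfl⟩ : ∃ j, k = j + 1 := ⟨k - 1, by omega⟩
  have h1 : (θ₁ : ZMod p) ≠ 0 := by rwa [Ne, ZMod.intCast_zmod_eq_zero_iff_dvd]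
  have h2 : (θ₂ : ZMod p) ≠ 0 := by rwa [Ne, ZMod.intCast_zmod_eq_zero_iff_dvd]
  have hmod : ∃ a b : ZMod p, (θ₁ : ZMod p) * a ^ 2 + θ₂ * b ^ 2 + θ₁ = 0 := by
    open Polynomial in
    have := FiniteField.exists_root_sum_quadratic (R := ZMod p)
      (f := C (θ₁ : ZMod p) * X ^ 2 + C 0 * X + C 0)
      (g := C (θ₂ : ZMod p) * X ^ 2 + C 0 * X + C (θ₁ : ZMod p))
      (degree_quadratic h1) (degree_quadratic h2)
      (by rw [ZMod.card]; exact Nat.odd_iff.mp hodd)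
    obtain ⟨a, b, hab⟩ := this
    refine ⟨a, b, ?_⟩
    simp at hab
    linear_combination hab
  obtain ⟨s, t, hst⟩ := hmod
  obtain ⟨s, rfl⟩ := ZMod.intCast_surjective s
  obtain ⟨t, rfl⟩ := ZMod.intCast_surjective t
  obtain ⟨a, b, hab⟩ := lift_quad p hp hodd θ₁ θ₂ (-θ₁)
    (by rwa [dvd_neg])
    ⟨s, t, by
      rw [← ZMod.intCast_zmod_eq_zero_iff_dvd]
      push_cast
      linear_combination hst⟩ j
  refine ⟨a, b, ?_⟩
  have h' : ((p ^ (j + 1) : ℕ) : ℤ) ∣ θ₁ * a ^ 2 + θ₂ * b ^ 2 - -θ₁ := by exact_mod_cast hab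
  rw [← ZMod.intCast_zmod_eq_zero_iff_dvd] at h'
  simp only [Int.cast_sub, Int.cast_add, Int.cast_mul, Int.cast_pow, Int.cast_neg] at h'
  linear_combination h'

theorem toQ2_congr_add (N : ℕ) (hN : N ≠ 0) (n n' m m' : ℤ)
    (h : ((n + n' : ℤ) : ZMod N) = ((m + m' : ℤ) : ZMod N)) :
    toQ2 (2 * (n : ℚ) / N) + toQ2 (2 * (n' : ℚ) / N) =
      toQ2 (2 * (m : ℚ) / N) + toQ2 (2 * (m' : ℚ) / N) := by
  have h1 := toQ2_congr N hN _ _ h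
  rw [← map_add, ← map_add]
  convert h1 using 2
  · push_cast
    ring
  · push_cast
    ring

theorem form_mult (R : Type) [CommRing R] (a b c θ x y : R) (h : a ^ 2 + c * b ^ 2 = -1) :
    θ * (a * x - c * b * y) ^ 2 + θ * c * (b * x + a * y) ^ 2 =
      -(θ * x ^ 2) + -(θ * c * y ^ 2) := by
  linear_combination (θ * (x ^ 2 + c * y ^ 2)) * h

/-- for an odd prime `p`, `k₁, k₂ ≥ 1` and `p ∤ θ₁θ₂`, the form
`q(a₁,a₂) = 2θ₁a₁²/p^k₁ + 2θ₂a₂²/p^k₂` on `(ℤ/p^k₁ℤ) × (ℤ/p^k₂ℤ)` admits an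
anti-automorphism iff `p ≡ 1 (mod 4)`, or `p ≡ 3 (mod 4)` and `k₁ = k₂`. -/
theorem statement9 (p k₁ k₂ : ℕ) (hp : p.Prime) (hodd : Odd p)
    (hk₁ : 0 < k₁) (hk₂ : 0 < k₂)
    (θ₁ θ₂ : ℤ) (hθ₁ : ¬ (p : ℤ) ∣ θ₁) (hθ₂ : ¬ (p : ℤ) ∣ θ₂) :
    (∃ f : (ZMod (p ^ k₁) × ZMod (p ^ k₂)) ≃+ (ZMod (p ^ k₁) × ZMod (p ^ k₂)),
        ∀ x, q9 p k₁ k₂ θ₁ θ₂ (f x) = - q9 p k₁ k₂ θ₁ θ₂ x) ↔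
      (p % 4 = 1 ∨ (p % 4 = 3 ∧ k₁ = k₂)) := by
  have hpk : ∀ k, p ^ k ≠ 0 := fun k => pow_ne_zero _ hp.ne_zero
  have : ∀ k, NeZero (p ^ k) := fun k => ⟨hpk k⟩
  have hp2 : p % 2 = 1 := Nat.odd_iff.mp hodd
  have hlt : ∀ k, 0 < k → Fact (1 < p ^ k) := fun k hk =>
    ⟨Nat.one_lt_pow (by omega) hp.one_lt⟩
  constructor
  · rintro ⟨f, hf⟩
    by_cases h4 : p % 4 = 3
    · right
      refine ⟨h4, ?_⟩
      by_contra hne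
      rcases Nat.lt_or_gt_of_ne hne with hlt' | hlt'
      · obtain ⟨d, rfl⟩ : ∃ d, k₂ = k₁ + d + 1 := ⟨k₂ - k₁ - 1, by omega⟩
        have h := hf (0, 1)
        have := hlt _ hk₂
        rw [eq_neg_iff_add_eq_zero] at h
        unfold q9 at h
        rw [← map_add] at h
        obtain ⟨n, hn⟩ := toQ2_zero_of _ h
        refine obstruct p k₁ d hp θ₁ θ₂ (f (0, 1)).1.val (f (0, 1)).2.val n hθ₂ ?_ h4
        rw [← hn]
        simp [ZMod.val_one, ZMod.val_zero]
      · obtain ⟨d, rfl⟩ : ∃ d, k₁ = k₂ + d + 1 := ⟨k₁ - k₂ - 1, by omega⟩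
        have h := hf (1, 0)
        have := hlt _ hk₁
        rw [eq_neg_iff_add_eq_zero] at h
        unfold q9 at h
        rw [← map_add] at h
        obtain ⟨n, hn⟩ := toQ2_zero_of _ h
        refine obstruct p k₂ d hp θ₂ θ₁ (f (1, 0)).2.val (f (1, 0)).1.val n hθ₁ ?_ h4
        rw [← hn]
        simp [ZMod.val_one, ZMod.val_zero]
        ring
    · left
      omega
  · rintro (h1 | ⟨-, rfl⟩)
    · obtain ⟨u, hu⟩ := exists_sqrt p k₁ hp hodd hk₁ h1
      obtain ⟨v, hv⟩ := exists_sqrt p k₂ hp hodd hk₂ h1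
      refine ⟨{ toFun := fun x => (u * x.1, v * x.2)
                invFun := fun x => (-u * x.1, -v * x.2)
                left_inv := ?_
                right_inv := ?_
                map_add' := ?_ }, ?_⟩
      · rintro ⟨x, y⟩
        ext
        · simp only
          linear_combination (-x) * hu
        · simp only
          linear_combination (-y) * hv
      · rintro ⟨x, y⟩
        ext
        · simp only
          linear_combination (-x) * hu
        · simp only
          linear_combination (-y) * hv
      · rintro ⟨x, y⟩ ⟨z, w⟩
        simp [mul_add]
      · rintro ⟨x, y⟩
        rw [q9_neg, q9_split]
        congr 1
        · apply toQ2_congr _ (hpk _)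
          simp
          linear_combination (θ₁ * x ^ 2) * hu
        · apply toQ2_congr _ (hpk _)
          simp
          linear_combination (θ₂ * y ^ 2) * hv
    · obtain ⟨a, b, hab⟩ := exists_rep p k₁ hp hodd hk₁ θ₁ θ₂ hθ₁ hθ₂
      obtain ⟨e, he⟩ : ∃ e : ZMod (p ^ k₁), e * θ₁ = 1 := by
        have hc : IsCoprime ((p : ℤ) ^ k₁) θ₁ :=
          (((Nat.prime_iff_prime_int.mp hp).coprime_iff_not_dvd).mpr hθ₁).pow_left
        obtain ⟨x, y, hxy⟩ := hc
        refine ⟨y, ?_⟩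
        have h3 := congrArg (Int.cast : ℤ → ZMod (p ^ k₁)) hxy
        have h0 : ((p : ZMod (p ^ k₁))) ^ k₁ = 0 := by
          exact_mod_cast ZMod.natCast_self (p ^ k₁)
        simp only [Int.cast_add, Int.cast_mul, Int.cast_pow, Int.cast_natCast,
          Int.cast_one, h0] at h3
        linear_combination h3
      obtain ⟨c, hc⟩ : ∃ c : ZMod (p ^ k₁), θ₁ * c = θ₂ :=
        ⟨e * θ₂, by linear_combination θ₂ * he⟩
      have hab' : a ^ 2 + c * b ^ 2 = -1 := by
        linear_combination e * hab - (a ^ 2 + c * b ^ 2 + 1) * he + e * b ^ 2 * hc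
      refine ⟨{ toFun := fun x => (a * x.1 - c * b * x.2, b * x.1 + a * x.2)
                invFun := fun x => (-(a * x.1 + c * b * x.2), b * x.1 - a * x.2)
                left_inv := ?_
                right_inv := ?_
                map_add' := ?_ }, ?_⟩
      · rintro ⟨x, y⟩
        ext
        · simp only
          linear_combination (-x) * hab'
        · simp only
          linear_combination (-y) * hab'
      · rintro ⟨x, y⟩
        ext
        · simp only
          linear_combination (-x) * hab'
        · simp only
          linear_combination (-y) * hab'
      · rintro ⟨x, y⟩ ⟨z, w⟩
        ext
        · simp only [Prod.mk_add_mk]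
          ring
        · simp only [Prod.mk_add_mk]
          ring
      · rintro ⟨x, y⟩
        rw [q9_neg, q9_split]
        apply toQ2_congr_add _ (hpk _)
        simp
        rw [← hc]
        exact form_mult _ a b c _ x y hab'
end

section
/- Let k be a positive integer and θ an odd integer. Define q : ℤ/2^kℤ → ℚ/2ℤ by q(ā) = θa²/2^k mod 2ℤ, on representatives a (this is well defined). Then there is no group automorphism f of ℤ/2^kℤ with q(f(x)) = −q(x) for all x. -/
/-- The discriminant form `q(a) = θa²/2^k mod 2ℤ` on `ℤ/2^kℤ`. -/
noncomputable def q10 (k : ℕ) (θ : ℤ) (a : ZMod (2 ^ k)) : QModTwo :=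
  toQ2 ((θ : ℚ) * (a.val : ℚ) ^ 2 / (2 : ℚ) ^ k)

/-- for `k ≥ 1` and `θ` odd, the form `q(a) = θa²/2^k` on `ℤ/2^kℤ`
admits no anti-automorphism. -/
theorem statement10 (k : ℕ) (hk : 0 < k) (θ : ℤ) (hθ : Odd θ) :
    ¬ ∃ f : ZMod (2 ^ k) ≃+ ZMod (2 ^ k),
        ∀ x : ZMod (2 ^ k), q10 k θ (f x) = - q10 k θ x := by
  rintro ⟨f, hf⟩
  have h := hf 1
  have : Fact (1 < 2 ^ k) := ⟨Nat.one_lt_two_pow hk.ne'⟩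
  unfold q10 at h
  rw [ZMod.val_one, eq_neg_iff_add_eq_zero, ← map_add] at h
  generalize (f 1).val = u at h
  have h2 := (QuotientAddGroup.eq_zero_iff _).1 h
  obtain ⟨m, hm⟩ := AddSubgroup.mem_zmultiples_iff.1 h2
  have h3 : (θ : ℚ) * ((u : ℚ) ^ 2 + 1) = 2 ^ k * 2 * m := by
    have h2k : (2 : ℚ) ^ k ≠ 0 := by positivity
    rw [zsmul_eq_mul] at hm
    field_simp at hm
    push_cast at hm
    linarith
  have h4 : θ * ((u : ℤ) ^ 2 + 1) = 2 ^ k * 2 * m := by exact_mod_cast h3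
  have h5 : (4 : ℤ) ∣ θ * ((u : ℤ) ^ 2 + 1) := by
    obtain ⟨j, rfl⟩ := Nat.exists_eq_succ_of_ne_zero hk.ne'
    exact ⟨2 ^ j * m, by rw [h4, pow_succ]; ring⟩
  have h6 : IsCoprime (4 : ℤ) θ := by
    obtain ⟨t, rfl⟩ := hθ
    exact ⟨-(t ^ 2 + t), 2 * t + 1, by ring⟩
  obtain ⟨c, hc⟩ := h6.dvd_of_dvd_mul_left h5
  rcases Int.even_or_odd' (u : ℤ) with ⟨w, hw | hw⟩
  · rw [hw] at hc
    ring_nf at hc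
    omega
  · rw [hw] at hc
    ring_nf at hc
    omega
end

section
/- Let k be a positive integer and θ₁, θ₂ odd integers. Define q : (ℤ/2^kℤ) × (ℤ/2^kℤ) → ℚ/2ℤ by q(ā₁, ā₂) = θ₁a₁²/2^k + θ₂a₂²/2^k mod 2ℤ, on representatives a₁, a₂ (this is well defined). Then there exists a group automorphism f of (ℤ/2^kℤ) × (ℤ/2^kℤ) with q(f(x)) = −q(x) for all x if and only if θ₁ + θ₂ ≡ 0 (mod 4). -/
/-- The discriminant form `q(a₁,a₂) = θ₁a₁²/2^k + θ₂a₂²/2^k mod 2ℤ`. -/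
noncomputable def q11 (k : ℕ) (θ₁ θ₂ : ℤ) (a : ZMod (2 ^ k) × ZMod (2 ^ k)) : QModTwo :=
  toQ2 ((θ₁ : ℚ) * (a.1.val : ℚ) ^ 2 / (2 : ℚ) ^ k + (θ₂ : ℚ) * (a.2.val : ℚ) ^ 2 / (2 : ℚ) ^ k)


lemma dvd_transport {a b c : ℤ} (h : a ∣ b) (e : c = b) : a ∣ c := e ▸ h

lemma toQ2_eq (k : ℕ) (m n : ℤ) :
    toQ2 ((m : ℚ) / 2 ^ k) = toQ2 ((n : ℚ) / 2 ^ k) ↔ (2 : ℤ) ^ (k + 1) ∣ n - m := by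
  have h2 : (2 : ℚ) ^ k ≠ 0 := by positivity
  unfold toQ2
  rw [QuotientAddGroup.mk'_apply, QuotientAddGroup.mk'_apply, QuotientAddGroup.eq,
    AddSubgroup.mem_zmultiples_iff]
  constructor
  · rintro ⟨c, hc⟩
    refine ⟨c, ?_⟩
    rw [zsmul_eq_mul] at hc
    field_simp at hc
    have : ((n - m : ℤ) : ℚ) = ((2 ^ (k + 1) * c : ℤ) : ℚ) := by
      push_cast
      rw [pow_succ]
      linarith
    exact_mod_cast this
  · rintro ⟨c, hc⟩
    refine ⟨c, ?_⟩
    have : ((n - m : ℤ) : ℚ) = ((2 ^ (k + 1) * c : ℤ) : ℚ) := by rw [hc]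
    push_cast at this
    rw [pow_succ] at this
    rw [zsmul_eq_mul]
    field_simp
    linarith

lemma sq_dvd (k : ℕ) (hk : 0 < k) (x y : ℤ) (h : (2 : ℤ) ^ k ∣ x - y) :
    (2 : ℤ) ^ (k + 1) ∣ x ^ 2 - y ^ 2 := by
  obtain ⟨c, hc⟩ := h
  obtain ⟨j, rfl⟩ : ∃ j, k = j + 1 := ⟨k - 1, by omega⟩
  obtain rfl : x = y + 2 ^ (j + 1) * c := by linarith
  exact ⟨c * y + 2 ^ j * c ^ 2, by ring⟩

lemma q11_int (k : ℕ) (hk : 0 < k) (θ₁ θ₂ x y : ℤ) :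
    q11 k θ₁ θ₂ ((x : ZMod (2 ^ k)), (y : ZMod (2 ^ k))) =
      toQ2 (((θ₁ * x ^ 2 + θ₂ * y ^ 2 : ℤ) : ℚ) / 2 ^ k) := by
  have key : ∀ z : ℤ, (2 : ℤ) ^ (k + 1) ∣ z ^ 2 - (((z : ZMod (2 ^ k)).val : ℕ) : ℤ) ^ 2 := by
    intro z
    apply sq_dvd k hk
    have : (((2 ^ k : ℕ)) : ℤ) ∣ z - (((z : ZMod (2 ^ k)).val : ℕ) : ℤ) := by
      rw [← ZMod.intCast_zmod_eq_zero_iff_dvd]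
      simp
    exact_mod_cast this
  have e : q11 k θ₁ θ₂ ((x : ZMod (2 ^ k)), (y : ZMod (2 ^ k))) =
      toQ2 (((θ₁ * (((x : ZMod (2 ^ k)).val : ℕ) : ℤ) ^ 2
        + θ₂ * (((y : ZMod (2 ^ k)).val : ℕ) : ℤ) ^ 2 : ℤ) : ℚ) / 2 ^ k) := by
    unfold q11
    congr 1
    push_cast
    ring
  rw [e, toQ2_eq]
  have := dvd_add (Dvd.dvd.mul_left (key x) θ₁) (Dvd.dvd.mul_left (key y) θ₂)
  refine dvd_transport (this) ?_
  ring

lemma q11_neg_iff (k : ℕ) (hk : 0 < k) (θ₁ θ₂ x y z w : ℤ) :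
    q11 k θ₁ θ₂ ((x : ZMod (2 ^ k)), (y : ZMod (2 ^ k))) =
      - q11 k θ₁ θ₂ ((z : ZMod (2 ^ k)), (w : ZMod (2 ^ k))) ↔
    (2 : ℤ) ^ (k + 1) ∣ θ₁ * (x ^ 2 + z ^ 2) + θ₂ * (y ^ 2 + w ^ 2) := by
  rw [q11_int k hk, q11_int k hk, ← map_neg, ← neg_div, ← Int.cast_neg, toQ2_eq, ← dvd_neg]
  ring_nf

lemma odd_sq (c : ℤ) (hc : (8 : ℤ) ∣ c - 1) (n : ℕ) :
    ∃ b : ℤ, Odd b ∧ (2 : ℤ) ^ (n + 3) ∣ b ^ 2 - c := by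
  induction n with
  | zero => exact ⟨1, odd_one, by norm_num; omega⟩
  | succ n ih =>
    obtain ⟨b, ⟨d, hd⟩, e, he⟩ := ih
    rcases Int.even_or_odd' e with ⟨g, hg | hg⟩
    · exact ⟨b, ⟨d, hd⟩, g, by rw [he, hg]; ring⟩
    · refine ⟨b + 2 ^ (n + 2), ⟨d + 2 ^ (n + 1), by rw [hd]; ring⟩, g + d + 1 + 2 ^ n, ?_⟩
      have : (b + 2 ^ (n + 2)) ^ 2 - c = (b ^ 2 - c) + 2 ^ (n + 3) * b + 2 ^ (2 * n + 4) := by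
        ring
      rw [this, he, hg, hd]
      ring

lemma exists_inv (t : ℤ) (ht : Odd t) (n : ℕ) : ∃ v : ℤ, (2 : ℤ) ^ n ∣ t * v - 1 := by
  have h : IsCoprime t ((2 : ℤ) ^ n) := by
    apply IsCoprime.pow_right
    obtain ⟨s, hs⟩ := ht
    exact ⟨1, -s, by rw [hs]; ring⟩
  obtain ⟨a, b, hab⟩ := h
  exact ⟨a, -b, by linarith⟩

lemma exists_uab (k : ℕ) (θ₁ θ₂ : ℤ) (hθ₁ : Odd θ₁) (h : (4 : ℤ) ∣ θ₁ + θ₂) :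
    ∃ u a b : ℤ, (2 : ℤ) ^ (k + 3) ∣ θ₁ * u + θ₂ ∧ (2 : ℤ) ^ (k + 3) ∣ a ^ 2 - u * b ^ 2 + 1 := by
  obtain ⟨w, hw⟩ := exists_inv θ₁ hθ₁ (k + 3)
  have h8 : (8 : ℤ) ∣ 2 ^ (k + 3) := ⟨2 ^ k, by ring⟩
  have hu : (2 : ℤ) ^ (k + 3) ∣ θ₁ * (-θ₂ * w) + θ₂ := by
    have := Dvd.dvd.mul_left hw (-θ₂)
    refine dvd_transport (this) ?_
    ring
  generalize -θ₂ * w = u at hu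
  have hu4 : (4 : ℤ) ∣ u - 1 := by
    have h1 : (4 : ℤ) ∣ θ₁ * u + θ₂ := (by norm_num : (4:ℤ) ∣ 8).trans (h8.trans hu)
    have h2 : (4 : ℤ) ∣ θ₁ * (u - 1) := by
      have := dvd_sub h1 h
      refine dvd_transport (this) ?_
      ring
    have hc : IsCoprime (4 : ℤ) θ₁ := by
      have : IsCoprime ((2 : ℤ) ^ 2) θ₁ := by
        apply IsCoprime.pow_left
        obtain ⟨s, hs⟩ := hθ₁
        exact ⟨-s, 1, by rw [hs]; ring⟩
      norm_num at this
      exact this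
    exact hc.dvd_of_dvd_mul_left h2
  have huo : Odd u := by
    obtain ⟨s, hs⟩ := hu4
    exact ⟨2 * s, by linarith⟩
  obtain ⟨v, hv⟩ := exists_inv u huo (k + 3)
  have huv : (8 : ℤ) ∣ u * v - 1 := h8.trans hv
  have main : ∀ a : ℤ, (8 : ℤ) ∣ v * (1 + a ^ 2) - 1 → ∃ u a b : ℤ,
      (2 : ℤ) ^ (k + 3) ∣ θ₁ * u + θ₂ ∧ (2 : ℤ) ^ (k + 3) ∣ a ^ 2 - u * b ^ 2 + 1 := by
    intro a ha
    obtain ⟨b, -, hb⟩ := odd_sq _ ha k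
    refine ⟨u, a, b, hu, ?_⟩
    have := dvd_add (Dvd.dvd.mul_left hb (-u)) (Dvd.dvd.mul_left hv (-(1 + a ^ 2)))
    refine dvd_transport (this) ?_
    ring
  obtain ⟨s, hs⟩ := hu4
  obtain rfl : u = 4 * s + 1 := by linarith
  rcases Int.even_or_odd' s with ⟨g, rfl | rfl⟩
  · apply main 0
    have : (8 : ℤ) ∣ v - 1 := by
      refine dvd_transport (dvd_sub huv (dvd_mul_right (8 : ℤ) (g * v))) ?_
      ring
    simpa using this
  · apply main 2
    refine dvd_transport (dvd_sub huv (dvd_mul_right (8 : ℤ) (g * v))) ?_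
    ring

/-- for `k ≥ 1` and odd `θ₁, θ₂`, the form
`q(a₁,a₂) = θ₁a₁²/2^k + θ₂a₂²/2^k` on `(ℤ/2^kℤ)²` admits an anti-automorphism
iff `θ₁ + θ₂ ≡ 0 (mod 4)`. -/
theorem statement11 (k : ℕ) (hk : 0 < k) (θ₁ θ₂ : ℤ) (hθ₁ : Odd θ₁) (hθ₂ : Odd θ₂) :
    (∃ f : (ZMod (2 ^ k) × ZMod (2 ^ k)) ≃+ (ZMod (2 ^ k) × ZMod (2 ^ k)),
        ∀ x, q11 k θ₁ θ₂ (f x) = - q11 k θ₁ θ₂ x) ↔ (4 : ℤ) ∣ (θ₁ + θ₂) := by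
  constructor
  · rintro ⟨f, hf⟩
    have h := hf (((1 : ℤ) : ZMod (2 ^ k)), ((0 : ℤ) : ZMod (2 ^ k)))
    obtain ⟨x, hx⟩ := ZMod.intCast_surjective (f (((1 : ℤ) : ZMod (2 ^ k)), ((0 : ℤ) : ZMod (2 ^ k)))).1
    obtain ⟨y, hy⟩ := ZMod.intCast_surjective (f (((1 : ℤ) : ZMod (2 ^ k)), ((0 : ℤ) : ZMod (2 ^ k)))).2
    rw [← Prod.mk.eta (p := f _), ← hx, ← hy, q11_neg_iff k hk] at h
    have h4 : (4 : ℤ) ∣ θ₁ * (x ^ 2 + 1 ^ 2) + θ₂ * (y ^ 2 + 0 ^ 2) := by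
      refine Dvd.dvd.trans ?_ h
      obtain ⟨j, rfl⟩ : ∃ j, k = j + 1 := ⟨k - 1, by omega⟩
      exact ⟨2 ^ j, by ring⟩
    clear h hx hy hf
    by_contra hne
    obtain ⟨s, rfl⟩ := hθ₁
    obtain ⟨t, rfl⟩ := hθ₂
    obtain ⟨r, hr⟩ : (2 : ℤ) ∣ t - s := by omega
    obtain rfl : t = s + 2 * r := by linarith
    have h5 : (4 : ℤ) ∣ (2 * s + 1) * (x ^ 2 + y ^ 2 + 1) := by
      refine dvd_transport (dvd_sub h4 (dvd_mul_right (4 : ℤ) (r * y ^ 2))) ?_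
      ring
    have hc : IsCoprime (4 : ℤ) (2 * s + 1) := by
      have : IsCoprime ((2 : ℤ) ^ 2) (2 * s + 1) := IsCoprime.pow_left ⟨-s, 1, by ring⟩
      norm_num at this
      exact this
    have h6 := hc.dvd_of_dvd_mul_left h5
    rcases Int.even_or_odd' x with ⟨m, rfl | rfl⟩ <;>
    rcases Int.even_or_odd' y with ⟨n, rfl | rfl⟩ <;> ring_nf at h6 <;> omega
  · intro h
    obtain ⟨u, a, b, hu, hab⟩ := exists_uab k θ₁ θ₂ hθ₁ h
    have hN : (a : ZMod (2 ^ k)) ^ 2 - u * b ^ 2 + 1 = 0 := by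
      have : (((2 ^ k : ℕ)) : ℤ) ∣ a ^ 2 - u * b ^ 2 + 1 := by
        refine Dvd.dvd.trans ?_ hab
        push_cast
        exact pow_dvd_pow _ (by omega)
      rw [← ZMod.intCast_zmod_eq_zero_iff_dvd] at this
      exact_mod_cast this
    refine ⟨{ toFun := fun p => (a * p.1 + u * b * p.2, b * p.1 + a * p.2)
              invFun := fun p => (-a * p.1 + u * b * p.2, b * p.1 - a * p.2)
              left_inv := ?_
              right_inv := ?_
              map_add' := ?_ }, ?_⟩
    · rintro ⟨x, y⟩
      ext
      · dsimp only
        linear_combination (-x) * hN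
      · dsimp only
        linear_combination (-y) * hN
    · rintro ⟨x, y⟩
      ext
      · dsimp only
        linear_combination (-x) * hN
      · dsimp only
        linear_combination (-y) * hN
    · rintro ⟨x, y⟩ ⟨z, w⟩
      ext
      · simp only [Prod.mk_add_mk]
        ring
      · simp only [Prod.mk_add_mk]
        ring
    · rintro ⟨x, y⟩
      obtain ⟨x, rfl⟩ := ZMod.intCast_surjective x
      obtain ⟨y, rfl⟩ := ZMod.intCast_surjective y
      have := q11_neg_iff k hk θ₁ θ₂ (a * x + u * b * y) (b * x + a * y) x y
      push_cast at this
      refine this.2 ?_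
      refine (pow_dvd_pow (2 : ℤ) (by omega : k + 1 ≤ k + 3)).trans ?_
      refine dvd_transport (dvd_add (Dvd.dvd.mul_left hab (θ₁ * x ^ 2 - θ₁ * u * y ^ 2))
        (Dvd.dvd.mul_left hu ((b * x + a * y) ^ 2 + y ^ 2))) ?_
      ring
end

section
/- Let k₁, k₂ be positive integers and θ₁, θ₂ odd integers. Define q : (ℤ/2^{k₁}ℤ) × (ℤ/2^{k₂}ℤ) → ℚ/2ℤ by q(ā₁, ā₂) = θ₁a₁²/2^{k₁} + θ₂a₂²/2^{k₂} mod 2ℤ, on representatives a₁, a₂ (this is well defined). Then there exists a group automorphism f of (ℤ/2^{k₁}ℤ) × (ℤ/2^{k₂}ℤ) with q(f(x)) = −q(x) for all x if and only if |k₁ − k₂| ≤ 1 and θ₁ + θ₂ ≡ 0 (mod 4). -/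
/-- The discriminant form `q(a₁,a₂) = θ₁a₁²/2^k₁ + θ₂a₂²/2^k₂ mod 2ℤ`. -/
noncomputable def q12 (k₁ k₂ : ℕ) (θ₁ θ₂ : ℤ) (a : ZMod (2 ^ k₁) × ZMod (2 ^ k₂)) : QModTwo :=
  toQ2 ((θ₁ : ℚ) * (a.1.val : ℚ) ^ 2 / (2 : ℚ) ^ k₁ +
    (θ₂ : ℚ) * (a.2.val : ℚ) ^ 2 / (2 : ℚ) ^ k₂)

theorem toQ2_eq_iff (r s : ℚ) : toQ2 r = toQ2 s ↔ ∃ m : ℤ, r - s = 2 * m := by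
  have h : toQ2 r = toQ2 s ↔ toQ2 (r - s) = 0 := by rw [map_sub, sub_eq_zero]
  rw [h]
  have h2 : toQ2 (r - s) = 0 ↔ (r - s) ∈ AddSubgroup.zmultiples (2 : ℚ) :=
    QuotientAddGroup.eq_zero_iff _
  rw [h2, AddSubgroup.mem_zmultiples_iff]
  constructor
  · rintro ⟨m, hm⟩
    exact ⟨m, by rw [← hm, zsmul_eq_mul]; ring⟩
  · rintro ⟨m, hm⟩
    exact ⟨m, by rw [hm, zsmul_eq_mul]; ring⟩

theorem val_rep (k : ℕ) (a : ℤ) : ∃ m : ℤ, (((a : ZMod (2 ^ k)).val : ℕ) : ℤ) = a + 2 ^ k * m := by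
  have h : ((((a : ZMod (2 ^ k)).val : ℕ) : ℤ) : ZMod (2 ^ k)) = (a : ZMod (2 ^ k)) := by simp
  rw [ZMod.intCast_eq_intCast_iff_dvd_sub] at h
  obtain ⟨m, hm⟩ := h
  push_cast at hm
  exact ⟨-m, by linarith⟩

theorem sq_rep (k : ℕ) (hk : 0 < k) (θ a : ℤ) :
    ∃ m : ℤ, (θ : ℚ) * ((a : ZMod (2 ^ k)).val : ℚ) ^ 2 / (2 : ℚ) ^ k
      = (θ : ℚ) * (a : ℚ) ^ 2 / (2 : ℚ) ^ k + 2 * m := by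
  obtain ⟨m, hm⟩ := val_rep k a
  obtain ⟨j, rfl⟩ : ∃ j, k = j + 1 := ⟨k - 1, by omega⟩
  have hq : ((a : ZMod (2 ^ (j + 1))).val : ℚ) = (a : ℚ) + 2 ^ (j + 1) * m := by exact_mod_cast hm
  refine ⟨θ * (a * m + 2 ^ j * m ^ 2), ?_⟩
  rw [hq]
  have : (2 : ℚ) ^ j ≠ 0 := by positivity
  push_cast
  field_simp
  ring

theorem q12_int (k₁ k₂ : ℕ) (hk₁ : 0 < k₁) (hk₂ : 0 < k₂) (θ₁ θ₂ a b : ℤ) :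
    q12 k₁ k₂ θ₁ θ₂ ((a : ZMod (2 ^ k₁)), (b : ZMod (2 ^ k₂))) =
      toQ2 ((θ₁ : ℚ) * (a : ℚ) ^ 2 / (2 : ℚ) ^ k₁ + (θ₂ : ℚ) * (b : ℚ) ^ 2 / (2 : ℚ) ^ k₂) := by
  obtain ⟨m, hm⟩ := sq_rep k₁ hk₁ θ₁ a
  obtain ⟨n, hn⟩ := sq_rep k₂ hk₂ θ₂ b
  unfold q12
  rw [toQ2_eq_iff]
  refine ⟨m + n, ?_⟩
  simp only
  rw [hm, hn]
  push_cast
  ring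

theorem q12_neg_iff (K d : ℕ) (hK : 0 < K) (θ₁ θ₂ a b c e : ℤ) :
    q12 (K + d) K θ₁ θ₂ ((a : ZMod (2 ^ (K + d))), (b : ZMod (2 ^ K))) =
      - q12 (K + d) K θ₁ θ₂ ((c : ZMod (2 ^ (K + d))), (e : ZMod (2 ^ K))) ↔
    (2 : ℤ) ^ (K + d + 1) ∣ θ₁ * a ^ 2 + 2 ^ d * θ₂ * b ^ 2 + (θ₁ * c ^ 2 + 2 ^ d * θ₂ * e ^ 2) := by
  rw [q12_int _ _ (by omega) hK, q12_int _ _ (by omega) hK, ← map_neg, toQ2_eq_iff]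
  have h1 : (2 : ℚ) ^ K ≠ 0 := by positivity
  have h2 : (2 : ℚ) ^ d ≠ 0 := by positivity
  have key : ∀ m : ℤ, ((θ₁ : ℚ) * (a : ℚ) ^ 2 / (2 : ℚ) ^ (K + d) + (θ₂ : ℚ) * (b : ℚ) ^ 2 / (2 : ℚ) ^ K
      - -((θ₁ : ℚ) * (c : ℚ) ^ 2 / (2 : ℚ) ^ (K + d) + (θ₂ : ℚ) * (e : ℚ) ^ 2 / (2 : ℚ) ^ K) = 2 * m) ↔
      θ₁ * a ^ 2 + 2 ^ d * θ₂ * b ^ 2 + (θ₁ * c ^ 2 + 2 ^ d * θ₂ * e ^ 2) = 2 ^ (K + d + 1) * m := by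
    intro m
    rw [← @Int.cast_inj ℚ]
    push_cast
    have : (θ₁ : ℚ) * (a : ℚ) ^ 2 / (2 : ℚ) ^ (K + d) + (θ₂ : ℚ) * (b : ℚ) ^ 2 / (2 : ℚ) ^ K
      - -((θ₁ : ℚ) * (c : ℚ) ^ 2 / (2 : ℚ) ^ (K + d) + (θ₂ : ℚ) * (e : ℚ) ^ 2 / (2 : ℚ) ^ K)
      = (θ₁ * a ^ 2 + 2 ^ d * θ₂ * b ^ 2 + (θ₁ * c ^ 2 + 2 ^ d * θ₂ * e ^ 2)) / (2 ^ K * 2 ^ d) := by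
      rw [pow_add]
      field_simp
      ring
    rw [this, div_eq_iff (by positivity)]
    have e : (2 : ℚ) ^ (K + d + 1) * m = 2 * m * (2 ^ K * 2 ^ d) := by ring
    rw [e]
  constructor
  · rintro ⟨m, hm⟩
    exact ⟨m, (key m).1 hm⟩
  · rintro ⟨m, hm⟩
    exact ⟨m, (key m).2 hm⟩

theorem exists_sq (u a : ℤ) (hu : Odd u) (h8 : (8 : ℤ) ∣ u - a) (n : ℕ) :
    ∃ y : ℤ, Odd y ∧ (2 : ℤ) ^ (n + 3) ∣ u * y ^ 2 - a := by
  induction n with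
  | zero => exact ⟨1, by decide, by simpa using h8⟩
  | succ n ih =>
    obtain ⟨y, hy, m, hm⟩ := ih
    rcases Int.even_or_odd m with ⟨r, hr⟩ | hmo
    · exact ⟨y, hy, r, by rw [hm, hr]; ring⟩
    · have h1 : Even (m + u * y) := hmo.add_odd (hu.mul hy)
      obtain ⟨r, hr⟩ := h1
      refine ⟨y + 2 ^ (n + 2), hy.add_even ⟨2 ^ (n + 1), by ring⟩, r + u * 2 ^ n, ?_⟩
      have : u * (y + 2 ^ (n + 2)) ^ 2 - a
          = (u * y ^ 2 - a) + 2 ^ (n + 3) * (u * y) + u * 2 ^ (n + 2) * 2 ^ (n + 2) := by ring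
      rw [this, hm, ← mul_add, hr]
      ring

theorem exists_xy (d : ℕ) (hd : d ≤ 1) (t : ℤ) (ht : (4 : ℤ) ∣ t + 1) (n : ℕ) :
    ∃ x y : ℤ, (2 : ℤ) ^ n ∣ x ^ 2 + 2 ^ d * t * y ^ 2 + 1 := by
  obtain ⟨r, hr⟩ := ht
  have hto : Odd t := ⟨2 * r - 1, by linarith⟩
  have hdvd : (2 : ℤ) ^ n ∣ 2 ^ (n + 3) := pow_dvd_pow _ (by omega)
  interval_cases d
  · rcases Int.even_or_odd r with ⟨s, hs⟩ | ⟨s, hs⟩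
    · obtain ⟨y, _, hy⟩ := exists_sq t (-1) hto ⟨s, by linarith⟩ n
      refine ⟨0, y, hdvd.trans ?_⟩
      obtain ⟨m, hm⟩ := hy
      exact ⟨m, by rw [← hm]; ring⟩
    · obtain ⟨y, _, hy⟩ := exists_sq t (-5) hto ⟨s + 1, by linarith⟩ n
      refine ⟨2, y, hdvd.trans ?_⟩
      obtain ⟨m, hm⟩ := hy
      exact ⟨m, by rw [← hm]; ring⟩
  · obtain ⟨x, _, hx⟩ := exists_sq 1 (-1 - 2 * t) (by decide) ⟨r, by linarith⟩ n
    refine ⟨x, 1, hdvd.trans ?_⟩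
    obtain ⟨m, hm⟩ := hx
    exact ⟨m, by rw [← hm]; ring⟩

theorem exists_hom (k₁ k₂ : ℕ) (A B C D : ℤ) (hB : (2 : ℤ) ^ k₁ ∣ 2 ^ k₂ * B)
    (hC : (2 : ℤ) ^ k₂ ∣ 2 ^ k₁ * C) :
    ∃ F : (ZMod (2 ^ k₁) × ZMod (2 ^ k₂)) →+ (ZMod (2 ^ k₁) × ZMod (2 ^ k₂)),
      ∀ a b : ℤ, F ((a : ZMod (2 ^ k₁)), (b : ZMod (2 ^ k₂))) =
        (((A * a + B * b : ℤ) : ZMod (2 ^ k₁)), ((C * a + D * b : ℤ) : ZMod (2 ^ k₂))) := by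
  have e1 : ∀ (k : ℕ) (z : ℤ), (2 : ℤ) ^ k ∣ z → (z : ZMod (2 ^ k)) = 0 := by
    intro k z hz
    rw [ZMod.intCast_zmod_eq_zero_iff_dvd]
    exact_mod_cast hz
  let v : ZMod (2 ^ k₁) × ZMod (2 ^ k₂) := ((A : ZMod (2 ^ k₁)), (C : ZMod (2 ^ k₂)))
  let w : ZMod (2 ^ k₁) × ZMod (2 ^ k₂) := ((B : ZMod (2 ^ k₁)), (D : ZMod (2 ^ k₂)))
  have hv : zmultiplesHom _ v ((2 ^ k₁ : ℕ) : ℤ) = 0 := by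
    have h1 := e1 k₁ (2 ^ k₁ * A) (dvd_mul_right _ _)
    have h2 := e1 k₂ _ hC
    push_cast at h1 h2
    simp only [zmultiplesHom_apply, v]
    ext <;> simp [zsmul_eq_mul, h1, h2]
  have hw : zmultiplesHom _ w ((2 ^ k₂ : ℕ) : ℤ) = 0 := by
    have h1 := e1 k₂ (2 ^ k₂ * D) (dvd_mul_right _ _)
    have h2 := e1 k₁ _ hB
    push_cast at h1 h2
    simp only [zmultiplesHom_apply, w]
    ext <;> simp [zsmul_eq_mul, h1, h2]
  refine ⟨(ZMod.lift (2 ^ k₁) ⟨zmultiplesHom _ v, hv⟩).coprod (ZMod.lift (2 ^ k₂) ⟨zmultiplesHom _ w, hw⟩), ?_⟩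
  intro a b
  rw [AddMonoidHom.coprod_apply]
  simp only [ZMod.lift_coe, zmultiplesHom_apply, v, w]
  ext <;> simp [zsmul_eq_mul] <;> ring

theorem core_suff (K d : ℕ) (hK : 0 < K) (θ₁ θ₂ : ℤ) (hd : d ≤ 1) (ht : (4 : ℤ) ∣ θ₁ * θ₂ + 1) :
    ∃ f : (ZMod (2 ^ (K + d)) × ZMod (2 ^ K)) ≃+ (ZMod (2 ^ (K + d)) × ZMod (2 ^ K)),
        ∀ x, q12 (K + d) K θ₁ θ₂ (f x) = - q12 (K + d) K θ₁ θ₂ x := by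
  obtain ⟨x, y, hxy⟩ := exists_xy d hd (θ₁ * θ₂) ht (K + d + 1)
  obtain ⟨F, hF⟩ := exists_hom (K + d) K x (-(2 ^ d * θ₂ * y)) (θ₁ * y) x
    ⟨-(θ₂ * y), by ring⟩ ⟨2 ^ d * (θ₁ * y), by ring⟩
  have red : ∀ (k : ℕ) (z w : ℤ), (2 : ℤ) ^ k ∣ w - z → (z : ZMod (2 ^ k)) = w := by
    intro k z w h
    rw [ZMod.intCast_eq_intCast_iff_dvd_sub]
    exact_mod_cast h
  have h1 : (2 : ℤ) ^ (K + d) ∣ x ^ 2 + 2 ^ d * (θ₁ * θ₂) * y ^ 2 + 1 :=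
    (pow_dvd_pow _ (by omega)).trans hxy
  have h2 : (2 : ℤ) ^ K ∣ x ^ 2 + 2 ^ d * (θ₁ * θ₂) * y ^ 2 + 1 :=
    (pow_dvd_pow _ (by omega)).trans hxy
  have hrep : ∀ p : ZMod (2 ^ (K + d)) × ZMod (2 ^ K), ∃ a b : ℤ,
      p = ((a : ZMod (2 ^ (K + d))), (b : ZMod (2 ^ K))) := by
    rintro ⟨p, r⟩
    obtain ⟨a, rfl⟩ := ZMod.intCast_surjective p
    obtain ⟨b, rfl⟩ := ZMod.intCast_surjective r
    exact ⟨a, b, rfl⟩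
  -- the adjugate is inverse to the matrix, since the determinant is -1
  obtain ⟨G, hG⟩ := exists_hom (K + d) K (-x) (-(2 ^ d * θ₂ * y)) (θ₁ * y) (-x)
    ⟨-(θ₂ * y), by ring⟩ ⟨2 ^ d * (θ₁ * y), by ring⟩
  refine ⟨⟨⟨F, G, ?_, ?_⟩, fun p r => map_add F p r⟩, ?_⟩
  · intro p
    obtain ⟨a, b, rfl⟩ := hrep p
    rw [hF, hG]
    obtain ⟨m, hm⟩ := h1
    obtain ⟨n, hn⟩ := h2
    refine Prod.ext (red _ _ _ ⟨m * a, ?_⟩) (red _ _ _ ⟨n * b, ?_⟩)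
    · rw [← mul_assoc, ← hm]
      ring
    · rw [← mul_assoc, ← hn]
      ring
  · intro p
    obtain ⟨a, b, rfl⟩ := hrep p
    rw [hG, hF]
    obtain ⟨m, hm⟩ := h1
    obtain ⟨n, hn⟩ := h2
    refine Prod.ext (red _ _ _ ⟨m * a, ?_⟩) (red _ _ _ ⟨n * b, ?_⟩)
    · rw [← mul_assoc, ← hm]
      ring
    · rw [← mul_assoc, ← hn]
      ring
  · intro p
    obtain ⟨a, b, rfl⟩ := hrep p
    show q12 (K + d) K θ₁ θ₂ (F _) = _
    rw [hF, q12_neg_iff K d hK]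
    obtain ⟨m, hm⟩ := hxy
    refine ⟨m * (θ₁ * a ^ 2 + 2 ^ d * θ₂ * b ^ 2), ?_⟩
    rw [← mul_assoc, ← hm]
    ring

theorem core_nec (K d : ℕ) (hK : 0 < K) (θ₁ θ₂ : ℤ) (hθ₁ : Odd θ₁) (hθ₂ : Odd θ₂)
    (h : ∃ f : (ZMod (2 ^ (K + d)) × ZMod (2 ^ K)) ≃+ (ZMod (2 ^ (K + d)) × ZMod (2 ^ K)),
        ∀ x, q12 (K + d) K θ₁ θ₂ (f x) = - q12 (K + d) K θ₁ θ₂ x) :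
    d ≤ 1 ∧ (4 : ℤ) ∣ θ₁ + θ₂ := by
  obtain ⟨f, hf⟩ := h
  have h0 := hf (((1 : ℤ) : ZMod (2 ^ (K + d))), ((0 : ℤ) : ZMod (2 ^ K)))
  obtain ⟨x, hx⟩ := ZMod.intCast_surjective
    (f (((1 : ℤ) : ZMod (2 ^ (K + d))), ((0 : ℤ) : ZMod (2 ^ K)))).1
  obtain ⟨y, hy⟩ := ZMod.intCast_surjective
    (f (((1 : ℤ) : ZMod (2 ^ (K + d))), ((0 : ℤ) : ZMod (2 ^ K)))).2
  have hxy : f (((1 : ℤ) : ZMod (2 ^ (K + d))), ((0 : ℤ) : ZMod (2 ^ K))) =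
    ((x : ZMod (2 ^ (K + d))), (y : ZMod (2 ^ K))) := by rw [hx, hy]
  rw [hxy, q12_neg_iff K d hK] at h0
  have sq : ∀ z : ℤ, (∃ m, z ^ 2 = 4 * m) ∨ (∃ m, z ^ 2 = 8 * m + 1) := by
    intro z
    rcases Int.even_or_odd z with ⟨r, hr⟩ | hz
    · exact Or.inl ⟨r ^ 2, by rw [hr]; ring⟩
    · obtain ⟨m, hm⟩ := Int.eight_dvd_sq_sub_one_of_odd hz
      exact Or.inr ⟨m, by linarith⟩
  obtain ⟨s, hs⟩ := hθ₁
  obtain ⟨t, ht⟩ := hθ₂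
  have h4 : (2 : ℤ) ^ (d + 2) ∣ θ₁ * x ^ 2 + 2 ^ d * θ₂ * y ^ 2 + θ₁ := by
    have := (pow_dvd_pow (2 : ℤ) (show d + 2 ≤ K + d + 1 by omega)).trans h0
    simpa using this
  rcases d with _ | _ | d
  · refine ⟨by omega, ?_⟩
    obtain ⟨c, hc⟩ := h4
    rcases sq x with ⟨m, hm⟩ | ⟨m, hm⟩ <;> rcases sq y with ⟨n, hn⟩ | ⟨n, hn⟩ <;>
      rw [hm, hn] at hc <;> subst hs ht <;> ring_nf at hc ⊢ <;> omega
  · refine ⟨by omega, ?_⟩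
    obtain ⟨c, hc⟩ := h4
    rcases sq x with ⟨m, hm⟩ | ⟨m, hm⟩ <;> rcases sq y with ⟨n, hn⟩ | ⟨n, hn⟩ <;>
      rw [hm, hn] at hc <;> subst hs ht <;> ring_nf at hc ⊢ <;> omega
  · exfalso
    have h5 : (4 : ℤ) ∣ 2 ^ (d + 1 + 1) * θ₂ * y ^ 2 := ⟨2 ^ d * θ₂ * y ^ 2, by ring⟩
    have h6 : (4 : ℤ) ∣ θ₁ * x ^ 2 + 2 ^ (d + 1 + 1) * θ₂ * y ^ 2 + θ₁ :=
      Dvd.dvd.trans ⟨2 ^ (d + 2), by ring⟩ h4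
    obtain ⟨c, hc⟩ := h5
    rw [hc] at h6
    obtain ⟨c', hc'⟩ := h6
    rcases sq x with ⟨m, hm⟩ | ⟨m, hm⟩ <;> rw [hm] at hc' <;> subst hs <;> ring_nf at hc' <;> omega

theorem four_dvd_iff (θ₁ θ₂ : ℤ) (hθ₁ : Odd θ₁) (hθ₂ : Odd θ₂) (h : (4 : ℤ) ∣ θ₁ + θ₂) :
    (4 : ℤ) ∣ θ₁ * θ₂ + 1 := by
  obtain ⟨c, hc⟩ := h
  obtain ⟨s, hs⟩ := hθ₁
  have : θ₂ = 4 * c - θ₁ := by linarith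
  refine ⟨θ₁ * c - s ^ 2 - s, ?_⟩
  rw [this, hs]
  ring

theorem core (K d : ℕ) (hK : 0 < K) (θ₁ θ₂ : ℤ) (hθ₁ : Odd θ₁) (hθ₂ : Odd θ₂) :
    (∃ f : (ZMod (2 ^ (K + d)) × ZMod (2 ^ K)) ≃+ (ZMod (2 ^ (K + d)) × ZMod (2 ^ K)),
        ∀ x, q12 (K + d) K θ₁ θ₂ (f x) = - q12 (K + d) K θ₁ θ₂ x) ↔
    d ≤ 1 ∧ (4 : ℤ) ∣ θ₁ + θ₂ :=
  ⟨core_nec K d hK θ₁ θ₂ hθ₁ hθ₂, fun h =>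
    core_suff K d hK θ₁ θ₂ h.1 (four_dvd_iff θ₁ θ₂ hθ₁ hθ₂ h.2)⟩

theorem q12_swap (k₁ k₂ : ℕ) (θ₁ θ₂ : ℤ) (p : ZMod (2 ^ k₁) × ZMod (2 ^ k₂)) :
    q12 k₂ k₁ θ₂ θ₁ p.swap = q12 k₁ k₂ θ₁ θ₂ p := by
  unfold q12
  simp only [Prod.fst_swap, Prod.snd_swap]
  rw [add_comm]

theorem swap_imp (k₁ k₂ : ℕ) (θ₁ θ₂ : ℤ)
    (h : ∃ f : (ZMod (2 ^ k₁) × ZMod (2 ^ k₂)) ≃+ (ZMod (2 ^ k₁) × ZMod (2 ^ k₂)),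
        ∀ x, q12 k₁ k₂ θ₁ θ₂ (f x) = - q12 k₁ k₂ θ₁ θ₂ x) :
    ∃ f : (ZMod (2 ^ k₂) × ZMod (2 ^ k₁)) ≃+ (ZMod (2 ^ k₂) × ZMod (2 ^ k₁)),
        ∀ x, q12 k₂ k₁ θ₂ θ₁ (f x) = - q12 k₂ k₁ θ₂ θ₁ x := by
  obtain ⟨f, hf⟩ := h
  refine ⟨(AddEquiv.prodComm.trans f).trans AddEquiv.prodComm, fun x => ?_⟩
  have h1 := hf x.swap
  rw [← q12_swap k₁ k₂, ← q12_swap k₁ k₂, Prod.swap_swap] at h1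
  exact h1


/-- for `k₁, k₂ ≥ 1` and odd `θ₁, θ₂`, the form
`q(a₁,a₂) = θ₁a₁²/2^k₁ + θ₂a₂²/2^k₂` on `(ℤ/2^k₁ℤ) × (ℤ/2^k₂ℤ)` admits an
anti-automorphism iff `|k₁ - k₂| ≤ 1` and `θ₁ + θ₂ ≡ 0 (mod 4)`. -/
theorem statement12 (k₁ k₂ : ℕ) (hk₁ : 0 < k₁) (hk₂ : 0 < k₂)
    (θ₁ θ₂ : ℤ) (hθ₁ : Odd θ₁) (hθ₂ : Odd θ₂) :
    (∃ f : (ZMod (2 ^ k₁) × ZMod (2 ^ k₂)) ≃+ (ZMod (2 ^ k₁) × ZMod (2 ^ k₂)),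
        ∀ x, q12 k₁ k₂ θ₁ θ₂ (f x) = - q12 k₁ k₂ θ₁ θ₂ x) ↔
      (|(k₁ : ℤ) - (k₂ : ℤ)| ≤ 1 ∧ (4 : ℤ) ∣ (θ₁ + θ₂)) := by
  rcases le_total k₂ k₁ with h | h
  · obtain ⟨d, rfl⟩ := Nat.exists_eq_add_of_le h
    rw [core k₂ d hk₂ θ₁ θ₂ hθ₁ hθ₂, abs_le]
    push_cast
    constructor <;> rintro ⟨h1, h2⟩ <;> refine ⟨?_, h2⟩ <;> omega
  · obtain ⟨d, rfl⟩ := Nat.exists_eq_add_of_le h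
    have hs := core k₁ d hk₁ θ₂ θ₁ hθ₂ hθ₁
    rw [add_comm θ₂ θ₁] at hs
    rw [show _ ↔ _ from ⟨swap_imp k₁ (k₁ + d) θ₁ θ₂, swap_imp (k₁ + d) k₁ θ₂ θ₁⟩, hs, abs_le]
    push_cast
    constructor <;> rintro ⟨h1, h2⟩ <;> refine ⟨?_, h2⟩ <;> omega
end

section
/- Let k be a positive integer and θ an odd integer. Define q : (ℤ/2^kℤ) × (ℤ/2^kℤ) → ℚ/2ℤ by q(ā₁, ā₂) = θ(a₁² + a₁a₂ + a₂²)/2^{k−1} mod 2ℤ, on representatives a₁, a₂ (this is well defined). Then there exists a group automorphism f of (ℤ/2^kℤ) × (ℤ/2^kℤ) with q(f(x)) = −q(x) for all x. -/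
/-- The discriminant form `q(a₁,a₂) = θ(a₁² + a₁a₂ + a₂²)/2^(k-1) mod 2ℤ`. -/
noncomputable def q13 (k : ℕ) (θ : ℤ) (a : ZMod (2 ^ k) × ZMod (2 ^ k)) : QModTwo :=
  toQ2 ((θ : ℚ) * ((a.1.val : ℚ) ^ 2 + (a.1.val : ℚ) * (a.2.val : ℚ) + (a.2.val : ℚ) ^ 2) /
    (2 : ℚ) ^ (k - 1))

theorem exists_root13 (k : ℕ) : ∃ d : ℤ, (2 : ℤ) ^ (k + 1) ∣ d ^ 2 + d + 2 := by
  induction k with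
  | zero => exact ⟨0, by norm_num⟩
  | succ k ih =>
    obtain ⟨d, m, hm⟩ := ih
    refine ⟨d + 2 ^ (k + 1) * m, m * (1 + d + 2 ^ k * m), ?_⟩
    have h : (d + 2 ^ (k + 1) * m) ^ 2 + (d + 2 ^ (k + 1) * m) + 2
        = (d ^ 2 + d + 2) + 2 ^ (k + 1) * m * (2 * d + 1) + (2 ^ (k + 1) * m) ^ 2 := by ring
    rw [h, hm]
    ring

theorem toQ2_add13 (k : ℕ) (hk : 0 < k) (θ m n : ℤ) (h : (2 : ℤ) ^ k ∣ m + n) :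
    toQ2 ((θ : ℚ) * (m : ℚ) / (2 : ℚ) ^ (k - 1)) = - toQ2 ((θ : ℚ) * (n : ℚ) / (2 : ℚ) ^ (k - 1)) := by
  rw [eq_neg_iff_add_eq_zero, ← map_add]
  obtain ⟨c, hc⟩ := h
  obtain ⟨j, rfl⟩ : ∃ j, k = j + 1 := ⟨k - 1, by omega⟩
  have hc' : (m : ℚ) + n = 2 ^ (j + 1) * c := by exact_mod_cast hc
  refine (QuotientAddGroup.eq_zero_iff _).2 (AddSubgroup.mem_zmultiples_iff.2 ⟨θ * c, ?_⟩)
  rw [← add_div, ← mul_add, hc']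
  simp only [zsmul_eq_mul, Nat.add_sub_cancel]
  push_cast
  field_simp
  ring

/-- for `k ≥ 1` and `θ` odd, the form
`q(a₁,a₂) = θ(a₁² + a₁a₂ + a₂²)/2^(k-1)` on `(ℤ/2^kℤ)²` admits an anti-automorphism. -/
theorem statement13 (k : ℕ) (hk : 0 < k) (θ : ℤ) (hθ : Odd θ) :
    ∃ f : (ZMod (2 ^ k) × ZMod (2 ^ k)) ≃+ (ZMod (2 ^ k) × ZMod (2 ^ k)),
      ∀ x, q13 k θ (f x) = - q13 k θ x := by
  obtain ⟨d, hd⟩ := exists_root13 (k - 1)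
  rw [Nat.sub_add_cancel hk] at hd
  have hD : (d : ZMod (2 ^ k)) ^ 2 + d + 2 = 0 := by
    have := (ZMod.intCast_zmod_eq_zero_iff_dvd (d ^ 2 + d + 2) (2 ^ k)).2 (by exact_mod_cast hd)
    exact_mod_cast this
  generalize (d : ZMod (2 ^ k)) = D at hD
  haveI : NeZero (2 ^ k) := ⟨by positivity⟩
  refine ⟨{ toFun := fun x => (x.1 - D * x.2, D * x.1 + x.2 + D * x.2)
            invFun := fun x => (-(1 + D) * x.1 - D * x.2, D * x.1 - x.2)
            left_inv := ?_
            right_inv := ?_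
            map_add' := ?_ }, ?_⟩
  · rintro ⟨a, b⟩
    ext
    · linear_combination (-a) * hD
    · linear_combination (-b) * hD
  · rintro ⟨a, b⟩
    ext
    · linear_combination (-a) * hD
    · linear_combination (-b) * hD
  · rintro ⟨a, b⟩ ⟨a', b'⟩
    ext
    · simp only [Prod.mk_add_mk]; ring
    · simp only [Prod.mk_add_mk]; ring
  · rintro ⟨a, b⟩
    have key := toQ2_add13 k hk θ
      (((a - D * b).val : ℤ) ^ 2 + ((a - D * b).val : ℤ) * ((D * a + b + D * b).val : ℤ)
        + ((D * a + b + D * b).val : ℤ) ^ 2)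
      ((a.val : ℤ) ^ 2 + (a.val : ℤ) * (b.val : ℤ) + (b.val : ℤ) ^ 2) (by
        have := (ZMod.intCast_zmod_eq_zero_iff_dvd
          ((((a - D * b).val : ℤ) ^ 2 + ((a - D * b).val : ℤ) * ((D * a + b + D * b).val : ℤ)
        + ((D * a + b + D * b).val : ℤ) ^ 2) +
          ((a.val : ℤ) ^ 2 + (a.val : ℤ) * (b.val : ℤ) + (b.val : ℤ) ^ 2)) (2 ^ k)).1 (by
            push_cast
            simp only [ZMod.natCast_val, ZMod.cast_id', id_eq]
            linear_combination (a ^ 2 + a * b + b ^ 2) * hD)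
        exact_mod_cast this)
    push_cast at key
    exact key
end

section
/- Let m be an odd positive integer and θ an integer coprime to m. Define q : ℤ/mℤ → ℚ/2ℤ by q(ā) = 2θa²/m mod 2ℤ, on representatives a (this is well defined). Then there exists a group automorphism f of ℤ/mℤ with q(f(x)) = −q(x) for all x if and only if every prime divisor of m is congruent to 1 modulo 4. -/
/-- The discriminant form `q(a) = 2θa²/m mod 2ℤ` on `ℤ/mℤ`. -/
noncomputable def q17 (m : ℕ) (θ : ℤ) (a : ZMod m) : QModTwo :=
  toQ2 (2 * (θ : ℚ) * (a.val : ℚ) ^ 2 / (m : ℚ))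

lemma q17_key (m : ℕ) (hm : 0 < m) (θ : ℤ) (hθ : IsCoprime θ (m : ℤ)) (x y : ZMod m) :
    q17 m θ y = - q17 m θ x ↔ y ^ 2 + x ^ 2 = 0 := by
  haveI : NeZero m := ⟨hm.ne'⟩
  have hmq : (m : ℚ) ≠ 0 := by exact_mod_cast hm.ne'
  have h1 : y ^ 2 + x ^ 2 = 0 ↔ (m : ℤ) ∣ (y.val : ℤ) ^ 2 + (x.val : ℤ) ^ 2 := by
    rw [← ZMod.intCast_zmod_eq_zero_iff_dvd]
    push_cast
    simp
  rw [h1, ← add_eq_zero_iff_eq_neg, q17, q17, ← map_add]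
  have h2 : ∀ r : ℚ, toQ2 r = 0 ↔ ∃ k : ℤ, k • (2 : ℚ) = r := by
    intro r
    unfold toQ2
    rw [QuotientAddGroup.mk'_apply, QuotientAddGroup.eq_zero_iff, AddSubgroup.mem_zmultiples_iff]
  rw [h2]
  constructor
  · rintro ⟨k, hk⟩
    refine hθ.symm.dvd_of_dvd_mul_left ⟨k, ?_⟩
    rw [zsmul_eq_mul] at hk
    field_simp at hk
    have : ((θ : ℚ) * ((y.val : ℚ) ^ 2 + (x.val : ℚ) ^ 2)) = m * k := by linarith
    exact_mod_cast this
  · rintro ⟨k, hk⟩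
    refine ⟨θ * k, ?_⟩
    have hk' : ((y.val : ℚ) ^ 2 + (x.val : ℚ) ^ 2) = m * k := by exact_mod_cast hk
    rw [zsmul_eq_mul]
    field_simp
    push_cast
    linear_combination (-θ : ℚ) * hk'

lemma hensel_aux (p : ℕ) (hp : p.Prime) (h4 : p % 4 = 1) (n : ℕ) :
    ∃ x : ℤ, ((p : ℤ) ^ (n + 1)) ∣ x ^ 2 + 1 := by
  haveI : Fact p.Prime := ⟨hp⟩
  induction n with
  | zero =>
    obtain ⟨y, hy⟩ := (ZMod.exists_sq_eq_neg_one_iff (p := p)).2 (by omega)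
    obtain ⟨x, rfl⟩ := ZMod.intCast_surjective y
    refine ⟨x, ?_⟩
    rw [zero_add, pow_one, ← ZMod.intCast_zmod_eq_zero_iff_dvd]
    push_cast
    linear_combination -hy
  | succ n ih =>
    obtain ⟨x, c, hc⟩ := ih
    have hcop : IsCoprime (p : ℤ) (2 * x) := by
      rw [Prime.coprime_iff_not_dvd (Nat.prime_iff_prime_int.1 hp)]
      intro h
      rcases (Nat.prime_iff_prime_int.1 hp).dvd_or_dvd h with h | h
      · have h' : p ∣ 2 := by exact_mod_cast h
        have := (Nat.prime_dvd_prime_iff_eq hp Nat.prime_two).1 h'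
        omega
      · have h3 : (p : ℤ) ∣ x ^ 2 + 1 := by
          rw [hc, pow_succ]
          exact ⟨p ^ n * c, by ring⟩
        have h5 : (p : ℤ) ∣ 1 := (Int.dvd_add_right (dvd_pow h two_ne_zero)).1 h3
        have h6 : p ∣ 1 := by exact_mod_cast h5
        exact hp.one_lt.ne' (Nat.dvd_one.1 h6)
    obtain ⟨a, b, hab⟩ := hcop
    refine ⟨x - b * c * p ^ (n + 1), a * c + b ^ 2 * c ^ 2 * p ^ n, ?_⟩
    linear_combination hc - (p : ℤ) ^ (n + 1) * c * hab

lemma sq_neg_one (m : ℕ) (hm : 0 < m) :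
    (∀ p : ℕ, p.Prime → p ∣ m → p % 4 = 1) → IsSquare (-1 : ZMod m) := by
  induction m using Nat.recOnPosPrimePosCoprime with
  | prime_pow p n hp hn =>
    intro h
    obtain ⟨k, rfl⟩ : ∃ k, n = k + 1 := ⟨n - 1, by omega⟩
    obtain ⟨x, hx⟩ := hensel_aux p hp (h p hp (dvd_pow_self p hn.ne')) k
    refine ⟨(x : ZMod (p ^ (k + 1))), ?_⟩
    have : ((x ^ 2 + 1 : ℤ) : ZMod (p ^ (k + 1))) = 0 := by
      rw [ZMod.intCast_zmod_eq_zero_iff_dvd]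
      exact_mod_cast hx
    push_cast at this
    linear_combination -this
  | zero => omega
  | one => intro _; exact ⟨0, Subsingleton.elim _ _⟩
  | coprime a b ha hb hab iha ihb =>
    intro h
    exact ZMod.isSquare_neg_one_mul hab
      (iha (by omega) fun p hp hd => h p hp (hd.mul_right b))
      (ihb (by omega) fun p hp hd => h p hp (hd.mul_left a))

/-- for `m` odd positive and `θ` coprime to `m`, the form `q(a) = 2θa²/m`
on `ℤ/mℤ` admits an anti-automorphism iff every prime divisor of `m` is `≡ 1 (mod 4)`. -/
theorem statement17 (m : ℕ) (hm : 0 < m) (hmodd : Odd m)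
    (θ : ℤ) (hθ : IsCoprime θ (m : ℤ)) :
    (∃ f : ZMod m ≃+ ZMod m, ∀ x : ZMod m, q17 m θ (f x) = - q17 m θ x) ↔
      (∀ p : ℕ, p.Prime → p ∣ m → p % 4 = 1) := by
  simp only [q17_key m hm θ hθ]
  constructor
  · rintro ⟨f, hf⟩ p hp hd
    have hs : IsSquare (-1 : ZMod m) := ⟨f 1, by linear_combination -(hf 1)⟩
    have h3 := Nat.mod_four_ne_three_of_mem_primeFactors_of_isSquare_neg_one
      (Nat.mem_primeFactors.2 ⟨hp, hd, hm.ne'⟩) hs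
    have := Nat.odd_iff.1 (hmodd.of_dvd_nat hd)
    omega
  · intro h
    obtain ⟨u, hu⟩ := sq_neg_one m hm h
    refine ⟨{ toFun := fun x => u * x, invFun := fun x => -u * x, left_inv := ?_,
              right_inv := ?_, map_add' := fun x y => mul_add u x y }, ?_⟩
    · intro x; linear_combination x * hu
    · intro x; linear_combination x * hu
    · intro x
      change (u * x) ^ 2 + x ^ 2 = 0
      linear_combination -x ^ 2 * hu
end

section
/- Let n be a positive integer. Define q : (ℤ/2ℤ) × (ℤ/2nℤ) → ℚ/2ℤ by q(ā₁, ā₂) = a₁²/2 − a₂²/(2n) mod 2ℤ, on representatives a₁, a₂ (this is well defined). Then there exists a group automorphism f of (ℤ/2ℤ) × (ℤ/2nℤ) with q(f(x)) = −q(x) for all x if and only if 4 does not divide n and every odd prime divisor of n is congruent to 1 modulo 4. -/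
/-- The discriminant form `q(a₁,a₂) = a₁²/2 - a₂²/(2n) mod 2ℤ` on `(ℤ/2ℤ) × (ℤ/2nℤ)`. -/
noncomputable def q18 (n : ℕ) (a : ZMod 2 × ZMod (2 * n)) : QModTwo :=
  toQ2 ((a.1.val : ℚ) ^ 2 / 2 - (a.2.val : ℚ) ^ 2 / (2 * (n : ℚ)))

lemma toQ2_eq_iff_s18 (n : ℕ) (hn : 0 < n) (u v : ℤ) :
    toQ2 ((u : ℚ) / (2 * (n : ℚ))) = toQ2 ((v : ℚ) / (2 * (n : ℚ))) ↔ (4 * n : ℤ) ∣ u - v := by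
  have hn' : (n : ℚ) ≠ 0 := by positivity
  rw [eq_comm]
  unfold toQ2
  rw [QuotientAddGroup.mk'_apply, QuotientAddGroup.mk'_apply, QuotientAddGroup.eq,
    AddSubgroup.mem_zmultiples_iff]
  constructor
  · rintro ⟨k, hk⟩
    refine ⟨k, ?_⟩
    rw [zsmul_eq_mul] at hk
    field_simp at hk
    have : (u - v : ℚ) = 4 * n * k := by linarith
    exact_mod_cast this
  · rintro ⟨k, hk⟩
    refine ⟨k, ?_⟩
    have : (u - v : ℚ) = 4 * n * k := by exact_mod_cast hk
    rw [zsmul_eq_mul]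
    field_simp
    linarith

lemma q18_int (n : ℕ) (hn : 0 < n) (a b : ℤ) :
    q18 n ((a : ZMod 2), (b : ZMod (2 * n))) =
      toQ2 (((n * a ^ 2 - b ^ 2 : ℤ) : ℚ) / (2 * (n : ℚ))) := by
  have hn' : (n : ℚ) ≠ 0 := by positivity
  have : NeZero (2 * n) := ⟨by omega⟩
  have ha : (2 : ℤ) ∣ ((a : ZMod 2).val : ℤ) - a := by
    rw [ZMod.val_intCast]; exact (Int.mod_modEq a 2).symm.dvd
  have hb : ((2 * n : ℕ) : ℤ) ∣ ((b : ZMod (2 * n)).val : ℤ) - b := by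
    rw [ZMod.val_intCast]; exact (Int.mod_modEq b _).symm.dvd
  unfold q18
  generalize ((a : ZMod 2).val) = a' at *
  generalize ((b : ZMod (2 * n)).val) = b' at *
  have : ((a' : ℚ) ^ 2 / 2 - (b' : ℚ) ^ 2 / (2 * (n : ℚ))) =
      ((n * (a' : ℤ) ^ 2 - (b' : ℤ) ^ 2 : ℤ) : ℚ) / (2 * (n : ℚ)) := by
    push_cast
    field_simp
  rw [this, toQ2_eq_iff_s18 n hn]
  obtain ⟨s, hs⟩ := ha
  obtain ⟨t, ht⟩ := hb
  have h1 : (a' : ℤ) = a + 2 * s := by linarith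
  have h2 : (b' : ℤ) = b + 2 * n * t := by push_cast at ht; linarith
  rw [h1, h2]
  exact ⟨a * s + s ^ 2 - b * t - n * t ^ 2, by ring⟩

lemma neg_toQ2 (n : ℕ) (u : ℤ) : - toQ2 ((u : ℚ) / (2 * (n : ℚ))) =
    toQ2 (((-u : ℤ) : ℚ) / (2 * (n : ℚ))) := by
  rw [← map_neg]; congr 1; push_cast; ring

lemma exists_rep_s18 {k : ℕ} (x : ZMod k) : ∃ a : ℤ, (a : ZMod k) = x :=
  ZMod.intCast_surjective x

lemma build (n : ℕ) (hn : 0 < n) (c b : ℤ) (h1 : (4 * n : ℤ) ∣ n - b ^ 2 - 1)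
    (h2 : (4 * n : ℤ) ∣ n * c ^ 2 - n ^ 2 + n) (h3 : (2 : ℤ) ∣ c - b) :
    ∃ f : (ZMod 2 × ZMod (2 * n)) ≃+ (ZMod 2 × ZMod (2 * n)),
        ∀ x, q18 n (f x) = - q18 n x := by
  have : NeZero (2 * n) := ⟨by omega⟩
  let g1 : ZMod 2 →+ ZMod 2 × ZMod (2 * n) := ZMod.lift 2
    ⟨zmultiplesHom _ ((c : ZMod 2), (n : ZMod (2 * n))), by
      have e : (2 : ZMod 2) = 0 := by decide
      have e' : (2 * n : ZMod (2 * n)) = 0 := by exact_mod_cast ZMod.natCast_self (2 * n)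
      ext <;> simp [e, e']⟩
  let g2 : ZMod (2 * n) →+ ZMod 2 × ZMod (2 * n) := ZMod.lift (2 * n)
    ⟨zmultiplesHom _ ((1 : ZMod 2), (b : ZMod (2 * n))), by
      have e : (2 : ZMod 2) = 0 := by decide
      have e' : (2 * n : ZMod (2 * n)) = 0 := by exact_mod_cast ZMod.natCast_self (2 * n)
      ext <;> simp [e, e']⟩
  let g := AddMonoidHom.coprod g1 g2
  have hg : ∀ x y : ℤ, g ((x : ZMod 2), (y : ZMod (2 * n))) =
      (((c * x + y : ℤ) : ZMod 2), ((n * x + b * y : ℤ) : ZMod (2 * n))) := by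
    intro x y
    simp only [g, g1, g2, AddMonoidHom.coprod_apply, ZMod.lift_coe]
    ext <;> simp <;> ring
  have hinj : Function.Injective g := by
    rw [injective_iff_map_eq_zero]
    rintro ⟨x, y⟩ h
    obtain ⟨x, rfl⟩ := exists_rep_s18 x
    obtain ⟨y, rfl⟩ := exists_rep_s18 y
    rw [hg, Prod.mk_eq_zero, ZMod.intCast_zmod_eq_zero_iff_dvd,
      ZMod.intCast_zmod_eq_zero_iff_dvd] at h
    rw [Prod.mk_eq_zero, ZMod.intCast_zmod_eq_zero_iff_dvd, ZMod.intCast_zmod_eq_zero_iff_dvd]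
    push_cast at h ⊢
    obtain ⟨⟨s, hs⟩, ⟨t, ht⟩⟩ := h
    obtain ⟨k, hk⟩ := h1
    obtain ⟨l, hl⟩ := h3
    have hy : y = 2 * n * (s - l * x - 2 * k * y - t * b) := by
      linear_combination (-b) * ht + n * hs - n * x * hl - y * hk
    have hnz : (n : ℤ) ≠ 0 := by positivity
    refine ⟨⟨t - b * (s - l * x - 2 * k * y - t * b), ?_⟩, ⟨_, hy⟩⟩
    apply mul_left_cancel₀ hnz
    linear_combination ht - b * hy
  refine ⟨AddEquiv.ofBijective g (Finite.injective_iff_bijective.mp hinj), ?_⟩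
  rintro ⟨x, y⟩
  obtain ⟨x, rfl⟩ := exists_rep_s18 x
  obtain ⟨y, rfl⟩ := exists_rep_s18 y
  rw [AddEquiv.ofBijective_apply, hg, q18_int n hn, q18_int n hn, neg_toQ2, toQ2_eq_iff_s18 n hn]
  obtain ⟨k, hk⟩ := h1
  obtain ⟨j, hj⟩ := h2
  obtain ⟨l, hl⟩ := h3
  refine ⟨k * y ^ 2 + j * x ^ 2 + l * x * y, ?_⟩
  linear_combination y ^ 2 * hk + x ^ 2 * hj + 2 * n * x * y * hl

lemma hensel (p : ℕ) (hp : p.Prime) (h4 : p % 4 = 1) (k : ℕ) :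
    ∃ b : ℤ, ((p ^ (k + 1) : ℕ) : ℤ) ∣ b ^ 2 + 1 := by
  induction k with
  | zero =>
    have := Fact.mk hp
    have : IsSquare (-1 : ZMod p) := ZMod.exists_sq_eq_neg_one_iff.mpr (by omega)
    obtain ⟨r, hr⟩ := this
    obtain ⟨b, rfl⟩ := exists_rep_s18 r
    refine ⟨b, ?_⟩
    rw [zero_add, pow_one, ← ZMod.intCast_zmod_eq_zero_iff_dvd]
    push_cast
    rw [pow_two, ← hr]; ring
  | succ k ih =>
    obtain ⟨b, t, ht⟩ := ih
    have hpi : Prime (p : ℤ) := Nat.prime_iff_prime_int.mp hp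
    have hcop : IsCoprime (2 * b) (p : ℤ) := by
      rw [isCoprime_comm, hpi.coprime_iff_not_dvd]
      intro h
      rcases hpi.dvd_or_dvd h with h | h
      · have := Int.le_of_dvd (by norm_num) h
        have := hp.two_le
        have : p = 2 := by omega
        omega
      · have h1 : (p : ℤ) ∣ b ^ 2 + 1 := ⟨p ^ k * t, by rw [ht]; push_cast; ring⟩
        have h2 : (p : ℤ) ∣ 1 := (Int.dvd_add_right (dvd_pow h two_ne_zero)).mp h1
        exact hpi.not_dvd_one h2
    obtain ⟨u, v, huv⟩ := hcop
    refine ⟨b - p ^ (k + 1) * (u * t), v * t + p ^ k * (u * t) ^ 2, ?_⟩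
    push_cast at ht ⊢
    linear_combination ht - p ^ (k + 1) * t * huv

lemma exists_sqrt_s18 (m : ℕ) : 0 < m → (∀ p : ℕ, p.Prime → p ∣ m → p % 4 = 1) →
    m % 4 = 1 ∧ ∃ b : ℤ, (m : ℤ) ∣ b ^ 2 + 1 := by
  induction m using Nat.recOnPosPrimePosCoprime with
  | prime_pow p n hp hn =>
    intro _ h
    have h4 := h p hp (dvd_pow_self p (by omega))
    refine ⟨by simp [Nat.pow_mod, h4], ?_⟩
    obtain ⟨k, rfl⟩ : ∃ k, n = k + 1 := ⟨n - 1, by omega⟩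
    exact hensel p hp h4 k
  | zero => intro h; omega
  | one => intro _ _; simp
  | coprime a b ha hb hab iha ihb =>
    intro _ h
    obtain ⟨ha4, x, hx⟩ := iha (by omega) (fun p hp hd => h p hp (hd.mul_right b))
    obtain ⟨hb4, y, hy⟩ := ihb (by omega) (fun p hp hd => h p hp (hd.mul_left a))
    refine ⟨by simp [Nat.mul_mod, ha4, hb4], ?_⟩
    have hc : IsCoprime (a : ℤ) (b : ℤ) := Nat.isCoprime_iff_coprime.mpr hab
    obtain ⟨u, v, huv⟩ := hc
    refine ⟨x + u * a * (y - x), ?_⟩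
    push_cast
    apply IsCoprime.mul_dvd ⟨u, v, huv⟩
    · have : (x + u * a * (y - x)) ^ 2 + 1 = (x ^ 2 + 1) +
        a * (2 * x * u * (y - x) + u ^ 2 * a * (y - x) ^ 2) := by ring
      rw [this]
      exact dvd_add hx (dvd_mul_right _ _)
    · have e : x + u * a * (y - x) = y + b * (- v * (y - x)) := by
        linear_combination (y - x) * huv
      have : (y + b * (- v * (y - x))) ^ 2 + 1 = (y ^ 2 + 1) +
        b * (2 * y * (- v * (y - x)) + b * (- v * (y - x)) ^ 2) := by ring
      rw [e, this]
      exact dvd_add hy (dvd_mul_right _ _)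

lemma exists_sqrt_parity (m : ℕ) (h4 : m % 4 = 1) (b : ℤ) (hb : (m : ℤ) ∣ b ^ 2 + 1) (r : ℤ)
    (hr : r = 0 ∨ r = 1) : ∃ b : ℤ, (m : ℤ) ∣ b ^ 2 + 1 ∧ b % 2 = r := by
  by_cases h : b % 2 = r
  · exact ⟨b, hb, h⟩
  · refine ⟨b + m, ?_, by omega⟩
    have : (b + m) ^ 2 + 1 = (b ^ 2 + 1) + m * (2 * b + m) := by ring
    rw [this]
    exact dvd_add hb (dvd_mul_right _ _)

/-- for `n ≥ 1`, the form `q(a₁,a₂) = a₁²/2 - a₂²/(2n)` on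
`(ℤ/2ℤ) × (ℤ/2nℤ)` admits an anti-automorphism iff `4 ∤ n` and every odd prime
divisor of `n` is `≡ 1 (mod 4)`. -/
theorem statement18 (n : ℕ) (hn : 0 < n) :
    (∃ f : (ZMod 2 × ZMod (2 * n)) ≃+ (ZMod 2 × ZMod (2 * n)),
        ∀ x, q18 n (f x) = - q18 n x) ↔
      (¬ 4 ∣ n ∧ ∀ p : ℕ, p.Prime → Odd p → p ∣ n → p % 4 = 1) := by
  constructor
  · rintro ⟨f, hf⟩
    have h := hf (((0 : ℤ) : ZMod 2), ((1 : ℤ) : ZMod (2 * n)))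
    obtain ⟨a, ha⟩ := exists_rep_s18 (f (((0 : ℤ) : ZMod 2), ((1 : ℤ) : ZMod (2 * n)))).1
    obtain ⟨b, hb⟩ := exists_rep_s18 (f (((0 : ℤ) : ZMod 2), ((1 : ℤ) : ZMod (2 * n)))).2
    rw [← Prod.mk.eta (p := f _), ← ha, ← hb, q18_int n hn, q18_int n hn, neg_toQ2,
      toQ2_eq_iff_s18 n hn] at h
    obtain ⟨k, hk⟩ := h
    have key : b ^ 2 + 1 = n * (a ^ 2 - 4 * k) := by linear_combination -hk
    constructor
    · rintro ⟨j, rfl⟩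
      push_cast at key
      have : (b ^ 2 + 1) % 4 = 0 := by
        rw [key, mul_assoc]; exact Int.mul_emod_right _ _
      rcases Int.even_or_odd' b with ⟨c, rfl | rfl⟩ <;> ring_nf at this <;> omega
    · intro p hp hodd hd
      have := Fact.mk hp
      have hsq : IsSquare (-1 : ZMod p) := by
        refine ⟨(b : ZMod p), ?_⟩
        have : ((b ^ 2 + 1 : ℤ) : ZMod p) = 0 := by
          rw [ZMod.intCast_zmod_eq_zero_iff_dvd, key]
          exact (Int.natCast_dvd_natCast.mpr hd).mul_right _
        push_cast at this
        linear_combination -this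
      have := ZMod.exists_sq_eq_neg_one_iff.mp hsq
      obtain ⟨j, hj⟩ := hodd
      omega
  · rintro ⟨h4, hp⟩
    rcases Nat.even_or_odd' n with ⟨m, rfl | hm⟩
    · have hmo : m % 2 = 1 := by omega
      obtain ⟨hm4, b, hb⟩ := exists_sqrt_s18 m (by omega) (fun p hpp hd => by
        refine hp p hpp ?_ (hd.mul_left 2)
        exact Odd.of_dvd_nat (Nat.odd_iff.mpr hmo) hd)
      obtain ⟨b, hb, hb2⟩ := exists_sqrt_parity m hm4 b hb 1 (Or.inr rfl)
      refine build (2 * m) hn 1 b ?_ ?_ (by omega)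
      · have e : (4 * ((2 * m : ℕ) : ℤ)) = 8 * m := by push_cast; ring
        rw [e]
        apply IsCoprime.mul_dvd
        · rw [show (8 : ℤ) = ((8 : ℕ) : ℤ) by rfl, Nat.isCoprime_iff_coprime]
          exact Nat.Coprime.pow_left 3 (Nat.coprime_two_left.mpr (Nat.odd_iff.mpr hmo))
        · have := Int.sq_mod_four_eq_one_of_odd (Int.odd_iff.mpr hb2)
          have h8 : (8 : ℤ) ∣ b ^ 2 - 1 := Int.eight_dvd_sq_sub_one_of_odd (Int.odd_iff.mpr hb2)
          push_cast
          omega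
        · have : ((2 * m : ℕ) : ℤ) - b ^ 2 - 1 = m * 2 - (b ^ 2 + 1) := by push_cast; ring
          rw [this]
          exact dvd_sub (dvd_mul_right _ _) hb
      · obtain ⟨j, hj⟩ : ∃ j, m = 2 * j + 1 := ⟨m / 2, by omega⟩
        refine ⟨- j, ?_⟩
        rw [hj]; push_cast; ring
    · obtain ⟨hm4, b, hb⟩ := exists_sqrt_s18 n hn (fun p hpp hd => 
        hp p hpp (Odd.of_dvd_nat ⟨m, hm⟩ hd) hd)
      obtain ⟨b, hb, hb2⟩ := exists_sqrt_parity n hm4 b hb 0 (Or.inl rfl)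
      refine build n hn 0 b ?_ ?_ (by omega)
      · apply IsCoprime.mul_dvd
        · rw [show (4 : ℤ) = ((4 : ℕ) : ℤ) by rfl, Nat.isCoprime_iff_coprime]
          exact Nat.Coprime.pow_left 2 (Nat.coprime_two_left.mpr ⟨m, hm⟩)
        · obtain ⟨c, rfl⟩ : ∃ c, b = 2 * c := ⟨b / 2, by omega⟩
          ring_nf
          omega
        · have : (n : ℤ) - b ^ 2 - 1 = n * 1 - (b ^ 2 + 1) := by ring
          rw [this]
          exact dvd_sub (dvd_mul_right _ _) hb
      · obtain ⟨j, hj⟩ : ∃ j, n = 4 * j + 1 := ⟨n / 4, by omega⟩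
        refine ⟨- j, ?_⟩
        rw [hj]; push_cast; ring
end
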